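/- Theorem D, ℚ(√−2)-dihedral family (triple powers): For every integer n ≥ 1, let z_n = (2·4^n + 1)/3 and take r = 24·(3·z_n). Then the quotient #{primes ℓ with 5 ≤ ℓ ≤ x and c_r(ν_r(ℓ)) = 1} / π(x) tends to (1/2)^{n+2} (in ℝ, as the natural number x → ∞). -/

import Mathlib

open Polynomial Filter

/-- The `N`-th Fourier coefficient of the mod-2 eta power `η^r(q^{m_r})`:
the coefficient of `X^N` in `X^{b_r} · ∏_{n=1}^{N} (1 − X^{m_r·n})^r` over `ZMod 2`,
where `m_r = 24 / gcd 24 r` and `b_r = r / gcd 24 r`. -/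
noncomputable def etaCoeff (r N : ℕ) : ZMod 2 :=
  (X ^ (r / Nat.gcd 24 r) *
    ∏ n ∈ Finset.Icc 1 N,
      ((1 : Polynomial (ZMod 2)) - X ^ (24 / Nat.gcd 24 r * n)) ^ r).coeff N

/-- `ν_r(ℓ)`: the smallest multiple of `ℓ` that is `≥ b_r` and congruent to `b_r`
modulo `m_r`. -/
noncomputable def nuR (r ℓ : ℕ) : ℕ :=
  sInf {N : ℕ | ℓ ∣ N ∧ r / Nat.gcd 24 r ≤ N ∧
    N % (24 / Nat.gcd 24 r) = (r / Nat.gcd 24 r) % (24 / Nat.gcd 24 r)}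

/-- `π(x)`: the number of primes `≤ x`. -/
def primePi (x : ℕ) : ℕ := ((Finset.range (x + 1)).filter Nat.Prime).card

/-- The number of primes `ℓ` with `5 ≤ ℓ ≤ x` and `c_r(ν_r(ℓ)) = 1`. -/
noncomputable def etaDensityCount (r x : ℕ) : ℕ :=
  ((Finset.range (x + 1)).filter
    (fun ℓ => ℓ.Prime ∧ 5 ≤ ℓ ∧ etaCoeff r (nuR r ℓ) = 1)).card

section Tauberian

open MeasureTheory Set Topology

theorem tendsto_of_tendsto_kernel_average {B : ℝ → ℝ} {M A : ℝ} (hB0 : ∀ u, 0 ≤ B u)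
    (hBM : ∀ u, B u ≤ M) (hmono : Monotone fun u => B u * Real.exp u)
    (hk : ∀ τ : ℝ, 0 < τ → ∃ κ : ℝ → ℝ, (∀ v, 0 ≤ κ v) ∧ Integrable κ ∧ ∫ v, κ v = 1 ∧
      1 - τ ≤ ∫ v in Icc (-τ) τ, κ v ∧
      Tendsto (fun y => ∫ v, B (y - v) * κ v) atTop (𝓝 A)) :
    Tendsto B atTop (𝓝 A) := by
  have hmeas : Measurable B := by
    have h := hmono.measurable.mul (Real.measurable_exp.comp measurable_neg)
    convert h using 1
    ext u
    simp [mul_assoc, ← Real.exp_add]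
  have hgrow : ∀ u w τ : ℝ, u ≤ w → w ≤ u + 2 * τ → B u ≤ B w * Real.exp (2 * τ) := by
    intro u w τ h1 h2
    have h3 := hmono h1
    simp only at h3
    have h4 : B w * Real.exp w ≤ B w * Real.exp (2 * τ) * Real.exp u := by
      rw [mul_assoc, ← Real.exp_add]
      exact mul_le_mul_of_nonneg_left (Real.exp_le_exp.2 (by linarith)) (hB0 w)
    exact le_of_mul_le_mul_right (h3.trans h4) (Real.exp_pos u)
  have key : ∀ τ : ℝ, 0 < τ → τ < 1 → ∀ᶠ y in atTop,
      B y ≤ Real.exp (2 * τ) * (A + τ) / (1 - τ) ∧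
      A - τ - M * τ ≤ B y * Real.exp (2 * τ) := by
    intro τ hτ hτ1
    obtain ⟨κ, hκ0, hκi, hκ1, hκτ, hlim⟩ := hk τ hτ
    have hBint : ∀ y, Integrable fun v => B (y - v) * κ v := fun y =>
      hκi.bdd_mul (c := M) (hmeas.comp (measurable_const.sub measurable_id)).aestronglyMeasurable
        (Eventually.of_forall fun v => by
          rw [Real.norm_eq_abs, abs_of_nonneg (hB0 _)]; exact hBM _)
    have e1 : ∀ᶠ y in atTop, ∫ v, B (y - v) * κ v < A + τ :=
      hlim.eventually_lt_const (by linarith)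
    have e2 : ∀ᶠ y in atTop, A - τ < ∫ v, B (y - v) * κ v :=
      hlim.eventually_const_lt (by linarith)
    have e1' := (tendsto_atTop_add_const_right atTop τ tendsto_id).eventually e1
    have e2' := (tendsto_atTop_add_const_right atTop (-τ) tendsto_id).eventually e2
    filter_upwards [e1', e2'] with y h1 h2
    simp only [id] at h1 h2
    constructor
    · have h3 : ∫ v in Icc (-τ) τ, (B y * Real.exp (-(2 * τ))) * κ v ≤
          ∫ v in Icc (-τ) τ, B (y + τ - v) * κ v := by
        refine setIntegral_mono_on (hκi.const_mul _).integrableOn (hBint _).integrableOn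
          measurableSet_Icc fun v hv => mul_le_mul_of_nonneg_right ?_ (hκ0 v)
        have := hgrow y (y + τ - v) τ (by linarith [hv.2]) (by linarith [hv.1])
        rw [Real.exp_neg, ← div_eq_mul_inv, div_le_iff₀ (Real.exp_pos _)]
        exact this
      have h4 : ∫ v in Icc (-τ) τ, B (y + τ - v) * κ v ≤ ∫ v, B (y + τ - v) * κ v :=
        setIntegral_le_integral (hBint _)
          (Eventually.of_forall fun v => mul_nonneg (hB0 _) (hκ0 _))
      rw [integral_const_mul] at h3
      have h5 : (B y * Real.exp (-(2 * τ))) * (1 - τ) ≤ A + τ := by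
        have := mul_le_mul_of_nonneg_left hκτ
          (mul_nonneg (hB0 y) (Real.exp_pos (-(2 * τ))).le)
        linarith
      rw [le_div_iff₀ (by linarith)]
      calc B y * (1 - τ)
          = Real.exp (2 * τ) * (B y * Real.exp (-(2 * τ)) * (1 - τ)) := by
            rw [Real.exp_neg]; field_simp
        _ ≤ _ := mul_le_mul_of_nonneg_left h5 (Real.exp_pos _).le
    · have h3 : ∫ v in Icc (-τ) τ, B (y + -τ - v) * κ v ≤
          ∫ v in Icc (-τ) τ, (B y * Real.exp (2 * τ)) * κ v := by
        refine setIntegral_mono_on (hBint _).integrableOn (hκi.const_mul _).integrableOn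
          measurableSet_Icc fun v hv => mul_le_mul_of_nonneg_right ?_ (hκ0 v)
        exact hgrow _ y τ (by linarith [hv.1]) (by linarith [hv.2])
      have h4 : ∫ v in (Icc (-τ) τ)ᶜ, B (y + -τ - v) * κ v ≤ ∫ v in (Icc (-τ) τ)ᶜ, M * κ v :=
        setIntegral_mono_on (hBint _).integrableOn (hκi.const_mul _).integrableOn
          measurableSet_Icc.compl fun v hv => mul_le_mul_of_nonneg_right (hBM _) (hκ0 v)
      have h5 := integral_add_compl (measurableSet_Icc (a := -τ) (b := τ)) (hBint (y + -τ))
      have h6 := integral_add_compl (measurableSet_Icc (a := -τ) (b := τ)) hκi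
      rw [integral_const_mul] at h3 h4
      have h7 : ∫ v in Icc (-τ) τ, κ v ≤ 1 := by
        rw [← hκ1]
        exact setIntegral_le_integral hκi (Eventually.of_forall hκ0)
      have h8 : (B y * Real.exp (2 * τ)) * ∫ v in Icc (-τ) τ, κ v ≤ B y * Real.exp (2 * τ) :=
        mul_le_of_le_one_right (mul_nonneg (hB0 y) (Real.exp_pos _).le) h7
      have h9 : M * ∫ v in (Icc (-τ) τ)ᶜ, κ v ≤ M * τ :=
        mul_le_mul_of_nonneg_left (by linarith) ((hB0 0).trans (hBM 0))
      linarith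
  rw [Metric.tendsto_nhds]
  intro ε hε
  have c1 : Tendsto (fun τ : ℝ => Real.exp (2 * τ) * (A + τ) / (1 - τ)) (𝓝[>] 0) (𝓝 A) := by
    have : ContinuousAt (fun τ : ℝ => Real.exp (2 * τ) * (A + τ) / (1 - τ)) 0 := by
      refine ContinuousAt.div (by fun_prop) (by fun_prop) (by norm_num)
    simpa using this.tendsto.mono_left nhdsWithin_le_nhds
  have c2 : Tendsto (fun τ : ℝ => (A - τ - M * τ) / Real.exp (2 * τ)) (𝓝[>] 0) (𝓝 A) := by
    have : ContinuousAt (fun τ : ℝ => (A - τ - M * τ) / Real.exp (2 * τ)) 0 := by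
      refine ContinuousAt.div (by fun_prop) (by fun_prop) (by norm_num)
    simpa using this.tendsto.mono_left nhdsWithin_le_nhds
  obtain ⟨τ, ⟨⟨h1, h2⟩, h3⟩, h4⟩ := (((c1.eventually_lt_const (show A < A + ε by linarith)).and
    (c2.eventually_const_lt (show A - ε < A by linarith))).and
    (nhdsWithin_le_nhds (Iio_mem_nhds (show (0 : ℝ) < 1 by norm_num)))).and
    self_mem_nhdsWithin |>.exists
  filter_upwards [key τ h4 h3] with y hy
  rw [Real.dist_eq, abs_lt]
  have := (div_le_iff₀ (Real.exp_pos (2 * τ))).2 hy.2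
  constructor <;> linarith [hy.1]

/-- The Fejér kernel with frequencies in `[-c, c]`. -/
noncomputable def fejer (c u : ℝ) : ℝ := 2 * (1 - Real.cos (c * u)) / u ^ 2

theorem fejer_nonneg (c u : ℝ) : 0 ≤ fejer c u :=
  div_nonneg (mul_nonneg zero_le_two (by linarith [Real.cos_le_one (c * u)])) (sq_nonneg u)

theorem fejer_le (c u : ℝ) : fejer c u ≤ (c ^ 2 + 4) * (1 + u ^ 2)⁻¹ := by
  rcases eq_or_ne u 0 with rfl | hu
  · simp only [fejer]
    norm_num
    positivity
  · have hu2 : 0 < u ^ 2 := by positivity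
    rw [fejer, ← div_eq_mul_inv, div_le_div_iff₀ hu2 (by positivity)]
    have h1 := Real.one_sub_sq_div_two_le_cos (x := c * u)
    have h2 := Real.neg_one_le_cos (c * u)
    nlinarith [mul_pow c u 2]

theorem measurable_fejer (c : ℝ) : Measurable (fejer c) := by
  unfold fejer
  fun_prop

theorem integrable_fejer (c : ℝ) : Integrable (fejer c) := by
  refine (integrable_inv_one_add_sq.const_mul (c ^ 2 + 4)).mono'
    (measurable_fejer c).aestronglyMeasurable (Eventually.of_forall fun u => ?_)
  rw [Real.norm_eq_abs, abs_of_nonneg (fejer_nonneg c u)]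
  exact fejer_le c u

theorem fejer_eq_scale {c : ℝ} (hc : c ≠ 0) (u : ℝ) : fejer c u = c ^ 2 * fejer 1 (c * u) := by
  rcases eq_or_ne u 0 with rfl | hu
  · simp [fejer]
  · simp only [fejer, one_mul]
    field_simp

theorem integral_fejer_one_pos : 0 < ∫ u, fejer 1 u := by
  rw [integral_pos_iff_support_of_nonneg (fejer_nonneg 1) (integrable_fejer 1)]
  refine lt_of_lt_of_le ?_ (measure_mono (show Ioo (0 : ℝ) 1 ⊆ _ from ?_))
  · simp
  · intro u hu
    have : Real.cos u < 1 := by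
      rw [← Real.cos_zero]
      exact Real.cos_lt_cos_of_nonneg_of_le_pi le_rfl (by linarith [Real.pi_gt_three, hu.2]) hu.1
    have h0 := hu.1
    simp only [Function.mem_support, fejer, one_mul]
    have : 0 < 1 - Real.cos u := by linarith
    positivity

theorem integral_fejer {c : ℝ} (hc : 0 < c) : ∫ u, fejer c u = c * ∫ u, fejer 1 u := by
  simp_rw [fejer_eq_scale hc.ne', integral_const_mul]
  rw [Measure.integral_comp_mul_left (fejer 1) c, abs_of_pos (inv_pos.2 hc), smul_eq_mul]
  field_simp

theorem setIntegral_fejer {c : ℝ} (hc : 0 < c) (τ : ℝ) (hτ : 0 < τ) :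
    ∫ u in Icc (-τ) τ, fejer c u = c * ∫ u in (-(c * τ))..(c * τ), fejer 1 u := by
  rw [integral_Icc_eq_integral_Ioc, ← intervalIntegral.integral_of_le (by linarith)]
  simp_rw [fejer_eq_scale hc.ne', intervalIntegral.integral_const_mul]
  rw [intervalIntegral.integral_comp_mul_left _ hc.ne', smul_eq_mul]
  simp only [mul_neg]
  field_simp

theorem exists_fejer_concentrated {τ : ℝ} (hτ : 0 < τ) : ∃ c : ℝ, 0 < c ∧
    (1 - τ) * ∫ u, fejer c u ≤ ∫ u in Icc (-τ) τ, fejer c u := by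
  have h1 : Tendsto (fun c : ℝ => ∫ u in (-(c * τ))..(c * τ), fejer 1 u) atTop
      (𝓝 (∫ u, fejer 1 u)) :=
    intervalIntegral_tendsto_integral (integrable_fejer 1)
      (tendsto_neg_atTop_atBot.comp (tendsto_id.atTop_mul_const hτ))
      (tendsto_id.atTop_mul_const hτ)
  have h2 := h1.eventually_const_lt
    (show (1 - τ) * ∫ u, fejer 1 u < ∫ u, fejer 1 u by nlinarith [integral_fejer_one_pos])
  obtain ⟨c, hc, hc0⟩ := (h2.and (eventually_gt_atTop 0)).exists
  refine ⟨c, hc0, ?_⟩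
  rw [integral_fejer hc0, setIntegral_fejer hc0 τ hτ]
  nlinarith

theorem integral_triangle_mul_exp {c u : ℝ} (hc : 0 < c) (hu : u ≠ 0) :
    ∫ t in (-c)..c, ((c - |t| : ℝ) : ℂ) * Complex.exp (Complex.I * t * u) = (fejer c u : ℂ) := by
  have hu' : (u : ℂ) ≠ 0 := by exact_mod_cast hu
  have hE : ∀ t : ℝ, HasDerivAt (fun t : ℝ => Complex.exp (Complex.I * t * u))
      (Complex.exp (Complex.I * t * u) * (Complex.I * u)) t := by
    intro t
    have h1 : HasDerivAt (fun t : ℝ => Complex.I * (t : ℂ) * u) (Complex.I * u) t := by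
      simpa using ((Complex.ofRealCLM.hasDerivAt (x := t)).const_mul Complex.I).mul_const (u : ℂ)
    exact h1.cexp
  have hcont : Continuous fun t : ℝ =>
      ((c - |t| : ℝ) : ℂ) * Complex.exp (Complex.I * t * u) := by fun_prop
  have hI : (Complex.I) ^ 2 = -1 := Complex.I_sq
  have hI0 := Complex.I_ne_zero
  have hneg : ∫ t in (-c)..0, ((c - |t| : ℝ) : ℂ) * Complex.exp (Complex.I * t * u) =
      (c / (Complex.I * u) + 1 / (u : ℂ) ^ 2) -
        Complex.exp (Complex.I * (-c : ℝ) * u) / (u : ℂ) ^ 2 := by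
    rw [intervalIntegral.integral_eq_sub_of_hasDerivAt_of_le (by linarith)
      (f := fun t : ℝ => ((c + t : ℝ) : ℂ) * Complex.exp (Complex.I * t * u) / (Complex.I * u)
        + Complex.exp (Complex.I * t * u) / (u : ℂ) ^ 2) (by fun_prop) ?_
        (hcont.intervalIntegrable _ _)]
    · simp
    · intro t ht
      have h2 : HasDerivAt (fun t : ℝ => ((c + t : ℝ) : ℂ)) 1 t := by
        simpa using ((hasDerivAt_id t).const_add c).ofReal_comp
      refine (((h2.mul (hE t)).div_const (Complex.I * u)).add
        ((hE t).div_const ((u : ℂ) ^ 2))).congr_deriv ?_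
      rw [abs_of_neg ht.2]
      push_cast
      field_simp
      linear_combination hI
  have hpos : ∫ t in (0 : ℝ)..c, ((c - |t| : ℝ) : ℂ) * Complex.exp (Complex.I * t * u) =
      - Complex.exp (Complex.I * c * u) / (u : ℂ) ^ 2 -
        (c / (Complex.I * u) - 1 / (u : ℂ) ^ 2) := by
    rw [intervalIntegral.integral_eq_sub_of_hasDerivAt_of_le hc.le
      (f := fun t : ℝ => ((c - t : ℝ) : ℂ) * Complex.exp (Complex.I * t * u) / (Complex.I * u)
        - Complex.exp (Complex.I * t * u) / (u : ℂ) ^ 2) (by fun_prop) ?_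
        (hcont.intervalIntegrable _ _)]
    · simp [neg_div]
    · intro t ht
      have h2 : HasDerivAt (fun t : ℝ => ((c - t : ℝ) : ℂ)) (-1) t := by
        simpa using ((hasDerivAt_id t).const_sub c).ofReal_comp
      refine (((h2.mul (hE t)).div_const (Complex.I * u)).sub
        ((hE t).div_const ((u : ℂ) ^ 2))).congr_deriv ?_
      rw [abs_of_pos ht.1]
      push_cast
      field_simp
      linear_combination (-1 : ℂ) * hI
  rw [← intervalIntegral.integral_add_adjacent_intervals (b := 0)
    (hcont.intervalIntegrable _ _) (hcont.intervalIntegrable _ _), hneg, hpos]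
  have hcos : ((fejer c u : ℝ) : ℂ) =
      (2 - (Complex.exp (Complex.I * c * u) + Complex.exp (Complex.I * (-c : ℝ) * u)))
        / (u : ℂ) ^ 2 := by
    have h3 := Complex.two_cos (c * u : ℂ)
    rw [fejer]
    have e1 : Complex.I * c * u = c * u * Complex.I := by ring
    have e2 : Complex.I * ((-c : ℝ) : ℂ) * u = -(c * u) * Complex.I := by push_cast; ring
    rw [e1, e2]
    push_cast
    rw [mul_sub, h3, mul_one]
  rw [hcos]
  field_simp
  ring

theorem integral_triangle_mul_laplace {β : ℝ → ℂ} {M : ℝ} (hβ : Measurable β)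
    (hM : ∀ u, ‖β u‖ ≤ M) {c δ : ℝ} (hc : 0 < c) (hδ : 0 < δ) (y : ℝ) :
    ∫ t in (-c)..c, ((c - |t| : ℝ) : ℂ) * Complex.exp (Complex.I * t * y) *
        ∫ u in Ioi (0 : ℝ), β u * Complex.exp (-((δ : ℂ) + t * Complex.I) * u) =
      ∫ u in Ioi (0 : ℝ), β u * Real.exp (-δ * u) * fejer c (y - u) := by
  have hswap : Integrable (Function.uncurry fun t u : ℝ =>
      ((c - |t| : ℝ) : ℂ) * Complex.exp (Complex.I * t * y) *
        (β u * Complex.exp (-((δ : ℂ) + t * Complex.I) * u)))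
      ((volume.restrict (Ioc (-c) c)).prod (volume.restrict (Ioi 0))) := by
    have h1 : Integrable (fun _ : ℝ => c) (volume.restrict (Ioc (-c) c)) :=
      integrable_const c
    have h2 : Integrable (fun u : ℝ => M * Real.exp (-δ * u)) (volume.restrict (Ioi 0)) :=
      (integrableOn_exp_mul_Ioi (neg_lt_zero.2 hδ) 0).const_mul M
    refine (h1.mul_prod h2).mono' ?_ ?_
    · have : Measurable (Function.uncurry fun t u : ℝ =>
        ((c - |t| : ℝ) : ℂ) * Complex.exp (Complex.I * t * y) *
          (β u * Complex.exp (-((δ : ℂ) + t * Complex.I) * u))) := by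
        unfold Function.uncurry
        fun_prop
      exact this.aestronglyMeasurable
    · rw [Measure.prod_restrict]
      refine (ae_restrict_iff' (measurableSet_Ioc.prod measurableSet_Ioi)).2
        (Eventually.of_forall ?_)
      rintro ⟨t, u⟩ ⟨ht, hu⟩
      simp only [Function.uncurry, norm_mul, Complex.norm_exp, Complex.norm_real]
      have e1 : (Complex.I * t * y : ℂ).re = 0 := by simp
      have e2 : (-((δ : ℂ) + t * Complex.I) * u : ℂ).re = -δ * u := by simp
      rw [e1, e2, Real.exp_zero, mul_one]
      have h3 : |t| ≤ c := abs_le.2 ⟨ht.1.le, ht.2⟩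
      have h4 : ‖c - |t|‖ ≤ c := by
        rw [Real.norm_eq_abs, abs_of_nonneg (by linarith)]
        linarith [abs_nonneg t]
      exact mul_le_mul h4 (mul_le_mul_of_nonneg_right (hM u) (Real.exp_pos _).le)
        (by positivity) hc.le
  rw [intervalIntegral.integral_of_le (by linarith)]
  simp_rw [← integral_const_mul]
  rw [integral_integral_swap hswap]
  refine setIntegral_congr_ae measurableSet_Ioi ?_
  have hne : ∀ᵐ u : ℝ, u ≠ y := by simp [ae_iff]
  filter_upwards [hne] with u hu _
  rw [← integral_triangle_mul_exp hc (sub_ne_zero.2 hu.symm),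
    intervalIntegral.integral_of_le (by linarith), ← integral_const_mul]
  refine integral_congr_ae (Eventually.of_forall fun t => ?_)
  have : Complex.exp (Complex.I * t * y) * Complex.exp (-((δ : ℂ) + t * Complex.I) * u) =
      ((Real.exp (-δ * u) : ℝ) : ℂ) * Complex.exp (Complex.I * t * ((y - u : ℝ) : ℂ)) := by
    rw [Complex.ofReal_exp, ← Complex.exp_add, ← Complex.exp_add]
    push_cast
    ring_nf
  simp only
  linear_combination ((c - |t| : ℝ) : ℂ) * β u * this

theorem integral_triangle_mul_boundary {β : ℝ → ℂ} {M : ℝ} (hβ : Measurable β)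
    (hM : ∀ u, ‖β u‖ ≤ M) {H : ℂ → ℂ} (hH : ContinuousOn H {s | 0 ≤ s.re})
    (hL : ∀ s : ℂ, 0 < s.re → ∫ u in Ioi (0 : ℝ), β u * Complex.exp (-s * u) = H s)
    {c : ℝ} (hc : 0 < c) (y : ℝ) :
    ∫ t in (-c)..c, ((c - |t| : ℝ) : ℂ) * Complex.exp (Complex.I * t * y) * H (t * Complex.I) =
      ∫ u in Ioi (0 : ℝ), β u * fejer c (y - u) := by
  obtain ⟨C, hC⟩ : ∃ C, ∀ s ∈ Icc (0 : ℝ) 1 ×ℂ Icc (-c) c, ‖H s‖ ≤ C :=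
    (isCompact_Icc.reProdIm isCompact_Icc).exists_bound_of_continuousOn
      (hH.mono fun s hs => hs.1.1)
  have hδ1 : ∀ᶠ δ : ℝ in 𝓝[>] 0, 0 < δ ∧ δ ≤ 1 := by
    filter_upwards [self_mem_nhdsWithin, nhdsWithin_le_nhds (Iio_mem_nhds (zero_lt_one' ℝ))]
      with δ h1 h2 using ⟨h1, le_of_lt h2⟩
  have hre : ∀ δ t : ℝ, ((δ : ℂ) + t * Complex.I).re = δ := by simp
  have him : ∀ δ t : ℝ, ((δ : ℂ) + t * Complex.I).im = t := by simp
  have hcH : ∀ δ : ℝ, 0 ≤ δ → Continuous fun t : ℝ => H ((δ : ℂ) + t * Complex.I) := fun δ hδ =>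
    hH.comp_continuous (by fun_prop) fun t => by simpa using hδ
  have h1 : Tendsto (fun δ : ℝ => ∫ t in (-c)..c,
      ((c - |t| : ℝ) : ℂ) * Complex.exp (Complex.I * t * y) * H ((δ : ℂ) + t * Complex.I))
      (𝓝[>] 0) (𝓝 (∫ t in (-c)..c,
      ((c - |t| : ℝ) : ℂ) * Complex.exp (Complex.I * t * y) * H (t * Complex.I))) := by
    refine intervalIntegral.tendsto_integral_filter_of_dominated_convergence (fun _ => c * C) ?_ ?_
      intervalIntegrable_const ?_
    · filter_upwards [hδ1] with δ hδ
      have h3 : Continuous fun t : ℝ =>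
          ((c - |t| : ℝ) : ℂ) * Complex.exp (Complex.I * t * y) := by fun_prop
      exact (h3.mul (hcH δ hδ.1.le)).aestronglyMeasurable
    · filter_upwards [hδ1] with δ hδ
      refine Eventually.of_forall fun t ht => ?_
      rw [uIoc_of_le (by linarith)] at ht
      have h3 : |t| ≤ c := abs_le.2 ⟨ht.1.le, ht.2⟩
      simp only [norm_mul, Complex.norm_exp, Complex.norm_real]
      have e1 : (Complex.I * t * y : ℂ).re = 0 := by simp
      rw [e1, Real.exp_zero, mul_one]
      have h4 : ‖c - |t|‖ ≤ c := by
        rw [Real.norm_eq_abs, abs_of_nonneg (by linarith)]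
        linarith [abs_nonneg t]
      refine mul_le_mul h4 (hC _ ⟨?_, ?_⟩) (norm_nonneg _) hc.le
      · simpa using ⟨hδ.1.le, hδ.2⟩
      · simpa using ⟨ht.1.le, ht.2⟩
    · refine Eventually.of_forall fun t _ => Tendsto.const_mul _ ?_
      have h5 := (hH (t * Complex.I) (by simp)).tendsto
      refine h5.comp (tendsto_nhdsWithin_iff.2 ⟨?_, ?_⟩)
      · have : Continuous fun δ : ℝ => (δ : ℂ) + t * Complex.I := by fun_prop
        simpa using (this.tendsto 0).mono_left nhdsWithin_le_nhds
      · filter_upwards [hδ1] with δ hδ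
        simpa using hδ.1.le
  have h2 : Tendsto (fun δ : ℝ => ∫ u in Ioi (0 : ℝ), β u * Real.exp (-δ * u) * fejer c (y - u))
      (𝓝[>] 0) (𝓝 (∫ u in Ioi (0 : ℝ), β u * fejer c (y - u))) := by
    have hm := measurable_fejer c
    refine tendsto_integral_filter_of_dominated_convergence (fun u => M * fejer c (y - u)) ?_ ?_
      (((integrable_fejer c).comp_sub_left y).const_mul M).integrableOn ?_
    · refine Eventually.of_forall fun δ => Measurable.aestronglyMeasurable ?_
      fun_prop
    · filter_upwards [hδ1] with δ hδ
      refine (ae_restrict_iff' measurableSet_Ioi).2 (Eventually.of_forall fun u hu => ?_)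
      simp only [norm_mul, Complex.norm_real]
      rw [Real.norm_of_nonneg (fejer_nonneg _ _), Real.norm_of_nonneg (Real.exp_pos _).le]
      refine mul_le_mul_of_nonneg_right ?_ (fejer_nonneg _ _)
      refine (mul_le_of_le_one_right (norm_nonneg _) ?_).trans (hM u)
      rw [Real.exp_le_one_iff]
      nlinarith [hδ.1, mem_Ioi.1 hu]
    · refine Eventually.of_forall fun u => ?_
      have : Continuous fun δ : ℝ => β u * Real.exp (-δ * u) * fejer c (y - u) := by fun_prop
      simpa using (this.tendsto 0).mono_left nhdsWithin_le_nhds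
  refine tendsto_nhds_unique (h1.congr' ?_) h2
  filter_upwards [hδ1] with δ hδ
  rw [← integral_triangle_mul_laplace hβ hM hc hδ.1 y]
  refine intervalIntegral.integral_congr fun t _ => ?_
  rw [hL _ (by simpa using hδ.1)]

theorem tendsto_integral_mul_fejer {β : ℝ → ℂ} {M : ℝ} (hβ : Measurable β)
    (hM : ∀ u, ‖β u‖ ≤ M) {H : ℂ → ℂ} (hH : ContinuousOn H {s | 0 ≤ s.re})
    (hL : ∀ s : ℂ, 0 < s.re → ∫ u in Ioi (0 : ℝ), β u * Complex.exp (-s * u) = H s)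
    {c : ℝ} (hc : 0 < c) :
    Tendsto (fun y : ℝ => ∫ u in Ioi (0 : ℝ), β u * fejer c (y - u)) atTop (𝓝 0) := by
  have hRL := Real.tendsto_integral_exp_smul_cocompact
    ((Ioc (-c) c).indicator fun t : ℝ => ((c - |t| : ℝ) : ℂ) * H (t * Complex.I))
  have hlin : Tendsto (fun y : ℝ => -(y / (2 * Real.pi))) atTop (cocompact ℝ) :=
    ((tendsto_neg_atTop_atBot.comp
      (tendsto_id.atTop_div_const (by positivity)))).mono_right atBot_le_cocompact
  refine (hRL.comp hlin).congr fun y => ?_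
  rw [← integral_triangle_mul_boundary hβ hM hH hL hc y,
    intervalIntegral.integral_of_le (by linarith), ← integral_indicator measurableSet_Ioc]
  refine integral_congr_ae (Eventually.of_forall fun t => ?_)
  by_cases ht : t ∈ Ioc (-c) c
  · simp only [indicator_of_mem ht]
    rw [Circle.smul_def, Real.fourierChar_apply, smul_eq_mul]
    have : ((2 * Real.pi * -(t * -(y / (2 * Real.pi))) : ℝ) : ℂ) * Complex.I =
        Complex.I * t * y := by
      have := Real.pi_ne_zero
      push_cast
      field_simp
    rw [this]
    ring
  · simp [indicator_of_notMem ht]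

/-- A form of the Wiener–Ikehara theorem. -/
theorem tendsto_of_laplace {B : ℝ → ℝ} {M A : ℝ} (hB0 : ∀ u, 0 ≤ B u)
    (hBneg : ∀ u < 0, B u = 0)
    (hBM : ∀ u, B u ≤ M) (hmono : Monotone fun u => B u * Real.exp u)
    {H : ℂ → ℂ} (hH : ContinuousOn H {s | 0 ≤ s.re})
    (hL : ∀ s : ℂ, 0 < s.re →
      ∫ u in Ioi (0 : ℝ), ((B u - A : ℝ) : ℂ) * Complex.exp (-s * u) = H s) :
    Tendsto B atTop (𝓝 A) := by
  have hmeas : Measurable B := by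
    have h := hmono.measurable.mul (Real.measurable_exp.comp measurable_neg)
    convert h using 1
    ext u
    simp [mul_assoc, ← Real.exp_add]
  refine tendsto_of_tendsto_kernel_average hB0 hBM hmono fun τ hτ => ?_
  obtain ⟨c, hc, hcτ⟩ := exists_fejer_concentrated hτ
  set J := ∫ u, fejer c u with hJ
  have hJ0 : 0 < J := by
    rw [hJ, integral_fejer hc]
    exact mul_pos hc integral_fejer_one_pos
  have hfi := integrable_fejer c
  refine ⟨fun v => fejer c v / J, fun v => div_nonneg (fejer_nonneg _ _) hJ0.le,
    hfi.div_const J, ?_, ?_, ?_⟩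
  · rw [integral_div, ← hJ, div_self hJ0.ne']
  · rw [integral_div, le_div_iff₀ hJ0]
    exact hcτ
  · have hbd : ∀ u, ‖((B u - A : ℝ) : ℂ)‖ ≤ M + |A| := fun u => by
      rw [Complex.norm_real, Real.norm_eq_abs]
      refine (abs_sub _ _).trans ?_
      rw [abs_of_nonneg (hB0 u)]
      linarith [hBM u]
    have h1 := tendsto_integral_mul_fejer (β := fun u => ((B u - A : ℝ) : ℂ))
      (by fun_prop) hbd hH hL hc
    have h1' : Tendsto (fun y : ℝ => ∫ u in Ioi (0 : ℝ), (B u - A) * fejer c (y - u))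
        atTop (𝓝 0) := by
      have := (Complex.continuous_re.tendsto 0).comp h1
      refine this.congr fun y => ?_
      simp only [Function.comp]
      rw [← Complex.ofReal_re (∫ u in Ioi (0 : ℝ), (B u - A) * fejer c (y - u)),
        ← integral_complex_ofReal]
      push_cast
      rfl
    have h2 : Tendsto (fun y : ℝ => ∫ u in Ioi (0 : ℝ), fejer c (y - u)) atTop (𝓝 J) := by
      have :=
        (aecover_Iio (μ := volume) (tendsto_id (α := ℝ) (x :=
          atTop))).integral_tendsto_of_countably_generated hfi
      refine this.congr fun y => ?_
      rw [← integral_indicator measurableSet_Iio, ← integral_indicator measurableSet_Ioi,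
        ← integral_sub_left_eq_self _ volume y]
      congr 1
      ext u
      simp [indicator, id]
    have hBint : ∀ y, Integrable fun u => B u * fejer c (y - u) := fun y =>
      (hfi.comp_sub_left y).bdd_mul (c := M) hmeas.aestronglyMeasurable
        (Eventually.of_forall fun v => by
          rw [Real.norm_eq_abs, abs_of_nonneg (hB0 _)]; exact hBM _)
    have h3 := (h1'.add (h2.const_mul A)).div_const J
    rw [zero_add, mul_div_assoc, div_self hJ0.ne', mul_one] at h3
    refine h3.congr fun y => ?_
    rw [← integral_const_mul, ← integral_add]
    · rw [← integral_sub_left_eq_self _ volume y, ← integral_div,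
        ← integral_indicator measurableSet_Ioi]
      refine integral_congr_ae ?_
      have hne : ∀ᵐ u : ℝ, u ≠ 0 := by simp [ae_iff]
      filter_upwards [hne] with u hu
      simp only [sub_sub_cancel]
      rcases lt_or_gt_of_ne hu with h | h
      · rw [indicator_of_notMem (by simpa using h.le), hBneg u h, zero_mul]
      · rw [indicator_of_mem (by simpa using h)]
        ring
    · have : (fun u => (B u - A) * fejer c (y - u)) =
        fun u => B u * fejer c (y - u) - A * fejer c (y - u) := by ext; ring
      rw [this]
      exact ((hBint y).sub ((hfi.comp_sub_left y).const_mul A)).integrableOn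
    · exact ((hfi.comp_sub_left y).const_mul A).integrableOn

/-- The Wiener–Ikehara theorem for Dirichlet series with nonnegative coefficients whose partial
sums satisfy a Chebyshev bound. -/
theorem tendsto_sum_div_of_LSeries {f : ℕ → ℝ} (hf : ∀ n, 0 ≤ f n) {M : ℝ}
    (hM : ∀ n : ℕ, ∑ k ∈ Finset.Icc 1 n, f k ≤ M * n) {A : ℝ} {G : ℂ → ℂ}
    (hG : ContinuousOn G {s | 1 ≤ s.re})
    (hL : ∀ s : ℂ, 1 < s.re → LSeries (fun n => (f n : ℂ)) s = A / (s - 1) + G s) :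
    Tendsto (fun n : ℕ => (∑ k ∈ Finset.Icc 1 n, f k) / n) atTop (𝓝 A) := by
  set S : ℕ → ℝ := fun n => ∑ k ∈ Finset.Icc 1 n, f k with hS
  have hS0 : ∀ n, 0 ≤ S n := fun n => Finset.sum_nonneg fun k _ => hf k
  have hSmono : Monotone S := fun m n hmn =>
    Finset.sum_le_sum_of_subset_of_nonneg (Finset.Icc_subset_Icc_right hmn) fun k _ _ => hf k
  have hM0 : 0 ≤ M := by simpa using (hS0 1).trans (hM 1)
  set B : ℝ → ℝ := fun u => S ⌊Real.exp u⌋₊ * Real.exp (-u) with hB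
  have hB0 : ∀ u, 0 ≤ B u := fun u => mul_nonneg (hS0 _) (Real.exp_pos _).le
  have hBM : ∀ u, B u ≤ M := fun u => by
    rw [hB]
    simp only
    rw [Real.exp_neg, ← div_eq_mul_inv, div_le_iff₀ (Real.exp_pos u)]
    exact (hM _).trans (mul_le_mul_of_nonneg_left (Nat.floor_le (Real.exp_pos u).le) hM0)
  have hBexp : ∀ u, B u * Real.exp u = S ⌊Real.exp u⌋₊ := fun u => by
    simp [hB, mul_assoc, ← Real.exp_add]
  have hmono : Monotone fun u => B u * Real.exp u := fun u v huv => by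
    simp only [hBexp]
    exact hSmono (Nat.floor_mono (Real.exp_le_exp.2 huv))
  have hBmeas : Measurable B := by
    have h := hmono.measurable.mul (Real.measurable_exp.comp measurable_neg)
    convert h using 1
    ext u
    simp [mul_assoc, ← Real.exp_add]
  have hO : (fun n ↦ ∑ k ∈ Finset.Icc 1 n, f k) =O[atTop] fun n ↦ (n : ℝ) ^ (1 : ℝ) := by
    refine Asymptotics.IsBigO.of_bound M (Eventually.of_forall fun n => ?_)
    rw [Real.rpow_one, Real.norm_of_nonneg (hS0 n), Real.norm_of_nonneg (Nat.cast_nonneg n)]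
    exact hM n
  have hlap : ∀ s : ℂ, 0 < s.re → ∫ u in Ioi (0 : ℝ), (B u : ℂ) * Complex.exp (-s * u) =
      LSeries (fun n => (f n : ℂ)) (1 + s) / (1 + s) := by
    intro s hs
    have hs1 : (1 + s : ℂ) ≠ 0 := fun h => by
      have := congrArg Complex.re h
      simp at this
      linarith
    rw [LSeries_eq_mul_integral_of_nonneg f zero_le_one (by simpa using hs) hO hf,
      mul_div_cancel_left₀ _ hs1]
    have himg : Real.exp '' Ioi 0 = Ioi 1 := by
      ext t
      constructor
      · rintro ⟨u, hu, rfl⟩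
        exact Real.one_lt_exp_iff.2 hu
      · intro ht
        exact ⟨Real.log t, Real.log_pos ht, Real.exp_log (zero_lt_one.trans ht)⟩
    rw [← himg, integral_image_eq_integral_abs_deriv_smul measurableSet_Ioi
      (fun x _ => (Real.hasDerivAt_exp x).hasDerivWithinAt) Real.exp_injective.injOn]
    refine integral_congr_ae (Eventually.of_forall fun u => ?_)
    simp only [hB, hS, abs_of_pos (Real.exp_pos u), Complex.real_smul]
    rw [Complex.cpow_def_of_ne_zero (by simp), ← Complex.ofReal_log (Real.exp_pos u).le,
      Real.log_exp]
    push_cast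
    have : Complex.exp (-u) * Complex.exp (-s * u) =
      Complex.exp u * Complex.exp (u * -(1 + s + 1)) := by
      rw [← Complex.exp_add, ← Complex.exp_add]
      ring_nf
    linear_combination (∑ k ∈ Finset.Icc 1 ⌊Real.exp u⌋₊, (f k : ℂ)) * this
  have hlim : Tendsto B atTop (𝓝 A) := by
    refine tendsto_of_laplace (H := fun s => (G (1 + s) - A) / (1 + s)) hB0 ?_ hBM hmono ?_ ?_
    · intro u hu
      have : ⌊Real.exp u⌋₊ = 0 := Nat.floor_eq_zero.2 (Real.exp_lt_one_iff.2 hu)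
      simp [hB, hS, this]
    · refine ContinuousOn.div ?_ (by fun_prop) ?_
      · refine ContinuousOn.sub (hG.comp (by fun_prop) fun s hs => ?_) continuousOn_const
        simpa using hs
      · intro s hs h
        have := congrArg Complex.re h
        simp only [mem_ofPred_eq] at hs
        simp at this
        linarith
    · intro s hs
      have hs0 : s ≠ 0 := fun h => by simp [h] at hs
      have hs1 : (1 + s : ℂ) ≠ 0 := fun h => by
        have := congrArg Complex.re h
        simp at this
        linarith
      have hexp : IntegrableOn (fun u : ℝ => Complex.exp (-s * u)) (Ioi 0) :=
        integrableOn_exp_mul_complex_Ioi (by simpa using hs) 0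
      have hBint : IntegrableOn (fun u : ℝ => (B u : ℂ) * Complex.exp (-s * u)) (Ioi 0) :=
        hexp.bdd_mul (c := M) (by fun_prop) (Eventually.of_forall fun u => by
          rw [Complex.norm_real, Real.norm_eq_abs, abs_of_nonneg (hB0 _)]
          exact hBM _)
      have h1 : ∫ u in Ioi (0 : ℝ), Complex.exp (-s * u) = 1 / s := by
        rw [integral_exp_mul_complex_Ioi (by simpa using hs) 0]
        simp
      push_cast
      simp_rw [sub_mul]
      rw [integral_sub hBint (hexp.const_mul _), integral_const_mul, h1, hlap s hs,
        hL _ (by simpa using hs), add_sub_cancel_left]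
      field_simp
      ring
  refine (hlim.comp (Real.tendsto_log_atTop.comp tendsto_natCast_atTop_atTop)).congr' ?_
  filter_upwards [eventually_gt_atTop 0] with n hn
  have hn' : (0 : ℝ) < n := by exact_mod_cast hn
  simp only [Function.comp, hB, hS, Real.exp_neg, Real.exp_log hn', Nat.floor_natCast,
    div_eq_mul_inv]

end Tauberian

section EtaPower

/-- Denominator-free form of Shanks' finite identity for sums over triangular numbers. -/
theorem shanks_identity {R : Type*} [CommRing R] (x : R) (n : ℕ) :
    (∏ i ∈ Finset.range n, (1 - x ^ (2 * i + 1))) *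
        ∑ s ∈ Finset.range (2 * n), x ^ (s * (s + 1) / 2) =
      ∑ s ∈ Finset.range n, (∏ i ∈ Finset.range s, (1 - x ^ (2 * i + 1))) *
        (∏ i ∈ Finset.Ico (s + 1) (n + 1), (1 - x ^ (2 * i))) * x ^ (s * (2 * n + 1)) := by
  induction n with
  | zero => simp
  | succ n ih =>
    set O : ℕ → R := fun s => ∏ i ∈ Finset.range s, (1 - x ^ (2 * i + 1)) with hO
    set E : ℕ → R := fun s => ∏ i ∈ Finset.Ico s (n + 1), (1 - x ^ (2 * i)) with hE
    have hOs : ∀ s, O (s + 1) = O s * (1 - x ^ (2 * s + 1)) := fun s =>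
      Finset.prod_range_succ _ _
    have hEs : ∀ s ∈ Finset.range n, E s = (1 - x ^ (2 * s)) * E (s + 1) := by
      intro s hs
      have := Finset.mem_range.1 hs
      exact Finset.prod_eq_prod_Ico_succ_bot (by omega) _
    have hE0 : E 0 = 0 := by
      apply Finset.prod_eq_zero (i := 0) <;> simp
    have hEn : E n = 1 - x ^ (2 * n) := by simp [hE]
    have key : ∑ s ∈ Finset.range n, (O s * (E (s + 1) * (1 - x ^ (2 * (n + 1)))) *
          x ^ (s * (2 * (n + 1) + 1)) -
        (1 - x ^ (2 * n + 1)) * (O s * E (s + 1) * x ^ (s * (2 * n + 1)))) =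
        O n * E n * x ^ (n * (2 * n + 1)) := by
      rw [← sub_zero (O n * E n * _)]
      rw [show (0 : R) = O 0 * E 0 * x ^ (0 * (2 * n + 1)) by rw [hE0]; simp]
      rw [← Finset.sum_range_sub (fun s => O s * E s * x ^ (s * (2 * n + 1)))]
      refine Finset.sum_congr rfl fun s hs => ?_
      rw [hOs, hEs s hs]
      ring
    rw [Finset.sum_sub_distrib, ← Finset.mul_sum, ← ih, sub_eq_iff_eq_add] at key
    have hlast : ∀ s ∈ Finset.range n, ∏ i ∈ Finset.Ico (s + 1) (n + 1 + 1), (1 - x ^ (2 * i)) =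
        E (s + 1) * (1 - x ^ (2 * (n + 1))) := by
      intro s hs
      have := Finset.mem_range.1 hs
      rw [Finset.prod_Ico_succ_top (by omega)]
    have hsum : ∑ s ∈ Finset.range n, O s *
        (∏ i ∈ Finset.Ico (s + 1) (n + 1 + 1), (1 - x ^ (2 * i))) * x ^ (s * (2 * (n + 1) + 1)) =
        ∑ s ∈ Finset.range n, O s * (E (s + 1) * (1 - x ^ (2 * (n + 1)))) *
          x ^ (s * (2 * (n + 1) + 1)) :=
      Finset.sum_congr rfl fun s hs => by rw [hlast s hs]
    rw [Finset.sum_range_succ, hsum, key]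
    have h1 : (2 * n) * (2 * n + 1) / 2 = n * (2 * n + 1) := by
      rw [mul_assoc, Nat.mul_div_cancel_left _ two_pos]
    have h2 : (2 * n + 1) * (2 * n + 1 + 1) / 2 = n * (2 * n + 1) + (2 * n + 1) := by
      rw [show (2 * n + 1) * (2 * n + 1 + 1) = 2 * (n * (2 * n + 1) + (2 * n + 1)) by ring,
        Nat.mul_div_cancel_left _ two_pos]
    rw [show 2 * (n + 1) = 2 * n + 1 + 1 by ring, Finset.sum_range_succ, Finset.sum_range_succ,
      h1, h2, Finset.prod_range_succ, hEn, Nat.Ico_succ_singleton, Finset.prod_singleton]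
    simp only [hO]
    ring

theorem prod_Icc_two_mul_eq {R : Type*} [CommRing R] (x : R) (n : ℕ) :
    ∏ i ∈ Finset.Icc 1 (2 * n), (1 - x ^ i) =
      (∏ i ∈ Finset.range n, (1 - x ^ (2 * i + 1))) *
        ∏ i ∈ Finset.Icc 1 n, (1 - x ^ (2 * i)) := by
  induction n with
  | zero => simp
  | succ n ih =>
    rw [show 2 * (n + 1) = 2 * n + 1 + 1 by ring, Finset.prod_Icc_succ_top (by omega),
      Finset.prod_Icc_succ_top (by omega), ih, Finset.prod_range_succ,
      Finset.prod_Icc_succ_top (by omega)]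
    ring

theorem X_pow_dvd_prod_pow_three_sub_sum {N : ℕ} (hN : 0 < N) :
    (X : (ZMod 2)[X]) ^ (N + 1) ∣ (∏ i ∈ Finset.Icc 1 N, (1 - X ^ i)) ^ 3 -
      ∑ s ∈ Finset.range (2 * N), X ^ (s * (s + 1) / 2) := by
  set Φ : ℕ → (ZMod 2)[X] := fun n => ∏ i ∈ Finset.Icc 1 n, (1 - X ^ i) with hΦ
  set T : (ZMod 2)[X] := ∑ s ∈ Finset.range (2 * N), X ^ (s * (s + 1) / 2) with hT
  have hE : ∏ i ∈ Finset.Icc 1 N, (1 - (X : (ZMod 2)[X]) ^ (2 * i)) = Φ N ^ 2 := by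
    rw [hΦ, ← Finset.prod_pow]
    refine Finset.prod_congr rfl fun i _ => ?_
    rw [sub_pow_char, one_pow, ← pow_mul, mul_comm]
  have h1 : (X : (ZMod 2)[X]) ^ (N + 1) ∣
      (∏ i ∈ Finset.range N, (1 - X ^ (2 * i + 1))) * T - Φ N ^ 2 := by
    obtain ⟨m, rfl⟩ : ∃ m, N = m + 1 := ⟨N - 1, by omega⟩
    rw [hT, shanks_identity, Finset.sum_range_succ', ← hE]
    simp only [Finset.range_zero, Finset.prod_empty, one_mul, zero_mul, pow_zero, mul_one, zero_add]
    rw [show Finset.Ico 1 (m + 1 + 1) = Finset.Icc 1 (m + 1) from rfl, add_sub_cancel_right]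
    refine Finset.dvd_sum fun s _ => Dvd.dvd.mul_left (pow_dvd_pow _ ?_) _
    nlinarith
  have h2 : (X : (ZMod 2)[X]) ^ (N + 1) ∣ Φ (2 * N) * T - Φ N ^ 4 := by
    have : Φ (2 * N) * T - Φ N ^ 4 =
        Φ N ^ 2 * ((∏ i ∈ Finset.range N, (1 - X ^ (2 * i + 1))) * T - Φ N ^ 2) := by
      rw [hΦ]
      simp only
      rw [prod_Icc_two_mul_eq, hE]
      ring
    rw [this]
    exact h1.mul_left _
  have h3 : ∀ k, (X : (ZMod 2)[X]) ^ (N + 1) ∣ Φ (N + k) - Φ N := by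
    intro k
    induction k with
    | zero => simp
    | succ k ih =>
      have : Φ (N + (k + 1)) - Φ N = Φ (N + k) - Φ N - Φ (N + k) * X ^ (N + k + 1) := by
        rw [hΦ]
        simp only
        rw [← add_assoc, Finset.prod_Icc_succ_top (by omega)]
        ring
      rw [this]
      exact dvd_sub ih ((pow_dvd_pow _ (by omega)).mul_left _)
  have h4 : (X : (ZMod 2)[X]) ^ (N + 1) ∣ Φ N * (Φ N ^ 3 - T) := by
    have := dvd_sub ((h3 N).mul_right T) h2
    rw [← two_mul] at this
    convert this using 1
    ring
  refine (IsCoprime.pow_left ?_).dvd_of_dvd_mul_left h4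
  refine IsCoprime.prod_right fun i hi => ⟨X ^ (i - 1), 1, ?_⟩
  have := (Finset.mem_Icc.1 hi).1
  rw [← pow_succ, Nat.sub_add_cancel this]
  ring

theorem X_pow_dvd_X_mul_prod_pow_sub_sum {N : ℕ} (hN : 0 < N) :
    (X : (ZMod 2)[X]) ^ (N + 1) ∣ X * (∏ i ∈ Finset.Icc 1 N, (1 - X ^ i)) ^ 24 -
      ∑ s ∈ Finset.range (2 * N), X ^ ((2 * s + 1) ^ 2) := by
  have h := pow_dvd_pow_of_dvd (X_pow_dvd_prod_pow_three_sub_sum hN) (2 ^ 3)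
  rw [sub_pow_char_pow, sum_pow_char_pow, ← pow_mul, ← pow_mul] at h
  have h' := (dvd_trans (pow_dvd_pow _ (by omega : N + 1 ≤ (N + 1) * 2 ^ 3)) h).mul_left X
  rw [mul_sub, Finset.mul_sum] at h'
  rw [show 3 * 2 ^ 3 = 24 by norm_num] at h'
  convert h' using 3 with s _
  rw [← pow_mul, ← pow_succ']
  congr 1
  have : s * (s + 1) / 2 * 2 = s * (s + 1) := Nat.div_mul_cancel (Nat.even_mul_succ_self s).two_dvd
  nlinarith

theorem coeff_eq_of_X_pow_dvd_sub {R : Type*} [CommRing R] {p q : R[X]} {N : ℕ}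
    (h : X ^ (N + 1) ∣ p - q) : p.coeff N = q.coeff N := by
  have := X_pow_dvd_iff.1 h N (Nat.lt_succ_self N)
  rwa [coeff_sub, sub_eq_zero] at this

theorem etaCoeff_eq_card (m : ℕ) {N : ℕ} (hN : 0 < N) :
    etaCoeff (24 * (2 ^ m + 1)) N =
      (((Finset.range (2 * N) ×ˢ Finset.range (2 * N)).filter
        (fun p => (2 * p.1 + 1) ^ 2 + 2 ^ m * (2 * p.2 + 1) ^ 2 = N)).card : ZMod 2) := by
  have hg : Nat.gcd 24 (24 * (2 ^ m + 1)) = 24 := Nat.gcd_eq_left (Dvd.intro _ rfl)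
  rw [etaCoeff, hg, Nat.mul_div_cancel_left _ (by norm_num), Nat.div_self (by norm_num)]
  simp only [one_mul]
  rw [Finset.prod_pow, pow_mul, ← mul_pow, pow_succ]
  set P : (ZMod 2)[X] := X * (∏ i ∈ Finset.Icc 1 N, (1 - X ^ i)) ^ 24 with hP
  set D : (ZMod 2)[X] := ∑ s ∈ Finset.range (2 * N), X ^ ((2 * s + 1) ^ 2) with hD
  have h : X ^ (N + 1) ∣ P - D := X_pow_dvd_X_mul_prod_pow_sub_sum hN
  have h2 : X ^ (N + 1) ∣ P ^ 2 ^ m * P - D ^ 2 ^ m * D := by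
    rw [← pow_succ, ← pow_succ]
    exact h.trans (sub_dvd_pow_sub_pow _ _ _)
  rw [coeff_eq_of_X_pow_dvd_sub h2, hD, sum_pow_char_pow, Finset.sum_mul_sum, finsetSum_coeff]
  simp only [finsetSum_coeff, ← pow_mul, ← pow_add, coeff_X_pow]
  rw [Finset.sum_comm, ← Finset.sum_product', ← Finset.sum_boole]
  refine Finset.sum_congr rfl fun p _ => ?_
  congr 1
  rw [eq_comm (a := N), add_comm, mul_comm (2 ^ m)]

theorem nuR_of_le {b ℓ : ℕ} (hb : 0 < b) (hℓ : b ≤ ℓ) : nuR (24 * b) ℓ = ℓ := by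
  have hg : Nat.gcd 24 (24 * b) = 24 := Nat.gcd_eq_left (Dvd.intro _ rfl)
  rw [nuR, hg, Nat.mul_div_cancel_left _ (by norm_num), Nat.div_self (by norm_num)]
  apply le_antisymm
  · exact Nat.sInf_le ⟨dvd_rfl, hℓ, by simp [Nat.mod_one]⟩
  · refine le_csInf ⟨ℓ, dvd_rfl, hℓ, by simp [Nat.mod_one]⟩ fun N hN => ?_
    exact Nat.le_of_dvd (hb.trans_le hN.2.1) hN.1

end EtaPower

section NormForm

namespace ZsqrtdNegTwo

theorem norm_eq (x : ℤ√(-2)) : x.norm = x.re ^ 2 + 2 * x.im ^ 2 := by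
  rw [Zsqrtd.norm_def]; ring

theorem norm_nonneg (x : ℤ√(-2)) : 0 ≤ x.norm := Zsqrtd.norm_nonneg (by norm_num) x

theorem norm_eq_zero {x : ℤ√(-2)} : x.norm = 0 ↔ x = 0 :=
  Zsqrtd.norm_eq_zero_iff (by norm_num) x

theorem norm_pos {x : ℤ√(-2)} (hx : x ≠ 0) : 0 < x.norm :=
  lt_of_le_of_ne (norm_nonneg x) fun h => hx (norm_eq_zero.1 h.symm)

instance : Div (ℤ√(-2)) :=
  ⟨fun x y => ⟨round ((x * star y).re / y.norm : ℚ), round ((x * star y).im / y.norm : ℚ)⟩⟩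

theorem div_def (x y : ℤ√(-2)) :
    x / y = ⟨round ((x * star y).re / y.norm : ℚ), round ((x * star y).im / y.norm : ℚ)⟩ := rfl

theorem norm_sub_mul_div_lt (x : ℤ√(-2)) {y : ℤ√(-2)} (hy : y ≠ 0) :
    (x - y * (x / y)).norm < y.norm := by
  have hn : (0 : ℚ) < y.norm := by exact_mod_cast norm_pos hy
  set u := (x * star y).re with hu
  set v := (x * star y).im with hv
  set a := round ((u : ℚ) / y.norm) with ha
  set b := round ((v : ℚ) / y.norm) with hb
  have h1 : (x - y * (x / y)).norm * y.norm = (u - y.norm * a) ^ 2 + 2 * (v - y.norm * b) ^ 2 := by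
    have hd : x / y = ⟨a, b⟩ := rfl
    rw [← Zsqrtd.norm_conj y, ← Zsqrtd.norm_mul, Zsqrtd.norm_conj, hd, norm_eq]
    clear_value a b
    congr 2
    · simp only [hu, norm_eq, Zsqrtd.re_mul, Zsqrtd.re_sub, Zsqrtd.im_sub, Zsqrtd.im_mul,
        Zsqrtd.re_star, Zsqrtd.im_star]
      ring
    · congr 1
      simp only [hv, norm_eq, Zsqrtd.re_mul, Zsqrtd.re_sub, Zsqrtd.im_sub, Zsqrtd.im_mul,
        Zsqrtd.re_star, Zsqrtd.im_star]
      ring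
  have key : ∀ w : ℤ, ((w : ℚ) - y.norm * round ((w : ℚ) / y.norm)) ^ 2 ≤ (y.norm : ℚ) ^ 2 / 4 := by
    intro w
    have h := abs_sub_round ((w : ℚ) / y.norm)
    have h2 : (w : ℚ) - y.norm * round ((w : ℚ) / y.norm) =
        y.norm * ((w : ℚ) / y.norm - round ((w : ℚ) / y.norm)) := by
      field_simp
    rw [h2, mul_pow]
    have h3 : ((w : ℚ) / y.norm - round ((w : ℚ) / y.norm)) ^ 2 ≤ (1 / 2) ^ 2 :=
      sq_le_sq' (abs_le.1 h).1 (abs_le.1 h).2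
    nlinarith [mul_le_mul_of_nonneg_left h3 (sq_nonneg (y.norm : ℚ))]
  have h2 : ((x - y * (x / y)).norm : ℚ) * y.norm < y.norm * y.norm := by
    have h1' : ((x - y * (x / y)).norm : ℚ) * y.norm =
        ((u : ℚ) - y.norm * a) ^ 2 + 2 * (v - y.norm * b) ^ 2 := by exact_mod_cast h1
    rw [h1']
    nlinarith [key u, key v, mul_pos hn hn]
  exact_mod_cast lt_of_mul_lt_mul_right h2 hn.le

instance : Nontrivial (ℤ√(-2)) := ⟨⟨0, 1, by decide⟩⟩

noncomputable instance : EuclideanDomain (ℤ√(-2)) :=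
  { (inferInstance : CommRing (ℤ√(-2))), (inferInstance : Nontrivial (ℤ√(-2))) with
    quotient := (· / ·)
    remainder := fun x y => x - y * (x / y)
    quotient_zero := fun x => by simp [div_def]; rfl
    quotient_mul_add_remainder_eq := fun x y => by ring
    r := _
    r_wellFounded := (measure fun x : ℤ√(-2) => x.norm.natAbs).wf
    remainder_lt := fun x y hy => by
      have h1 := norm_sub_mul_div_lt x hy
      have h2 := norm_nonneg (x - y * (x / y))
      exact Int.natAbs_lt_natAbs_of_nonneg_of_lt h2 h1
    mul_left_not_lt := fun x y hy => by
      refine not_lt_of_ge (α := ℕ) ?_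
      change x.norm.natAbs ≤ (x * y).norm.natAbs
      rw [Zsqrtd.norm_mul, Int.natAbs_mul]
      exact Nat.le_mul_of_pos_right _ (Int.natAbs_pos.2 (norm_pos hy).ne') }

/-- The norm as a natural number. -/
def normNat (x : ℤ√(-2)) : ℕ := x.norm.natAbs

theorem coe_normNat (x : ℤ√(-2)) : (normNat x : ℤ) = x.re ^ 2 + 2 * x.im ^ 2 := by
  rw [normNat, Int.natAbs_of_nonneg (norm_nonneg x), norm_eq]

theorem normNat_mul (x y : ℤ√(-2)) : normNat (x * y) = normNat x * normNat y := by
  rw [normNat, Zsqrtd.norm_mul, Int.natAbs_mul]; rfl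

theorem normNat_pow (x : ℤ√(-2)) (j : ℕ) : normNat (x ^ j) = normNat x ^ j := by
  induction j with
  | zero => simp [normNat]
  | succ j ih => rw [pow_succ, normNat_mul, ih, pow_succ]

theorem normNat_neg (x : ℤ√(-2)) : normNat (-x) = normNat x := by
  rw [normNat, Zsqrtd.norm_neg]; rfl

theorem normNat_star (x : ℤ√(-2)) : normNat (star x) = normNat x := by
  rw [normNat, Zsqrtd.norm_conj]; rfl

theorem normNat_pos {x : ℤ√(-2)} (hx : x ≠ 0) : 0 < normNat x :=
  Int.natAbs_pos.2 (norm_pos hx).ne'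

theorem normNat_natCast (n : ℕ) : normNat (n : ℤ√(-2)) = n * n := by
  rw [normNat, Zsqrtd.norm_natCast, Int.natAbs_mul, Int.natAbs_natCast]

theorem coe_normNat_eq_mul_star (x : ℤ√(-2)) : (normNat x : ℤ√(-2)) = x * star x := by
  rw [← Zsqrtd.norm_eq_mul_conj, ← Int.cast_natCast, normNat,
    Int.natAbs_of_nonneg (norm_nonneg x)]

theorem isUnit_iff {x : ℤ√(-2)} : IsUnit x ↔ x = 1 ∨ x = -1 := by
  constructor
  · intro h
    have h1 : x.norm = 1 := (Zsqrtd.norm_eq_one_iff' (by norm_num) x).2 h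
    rw [norm_eq] at h1
    have him : x.im = 0 := by
      by_contra h0
      have : 0 < x.im ^ 2 := by positivity
      nlinarith [sq_nonneg x.re]
    rw [him] at h1
    have hre : x.re ^ 2 = 1 := by linarith
    rcases sq_eq_one_iff.1 hre with h | h
    · left; ext <;> simp [h, him]
    · right; ext <;> simp [h, him]
  · rintro (rfl | rfl)
    · exact isUnit_one
    · exact isUnit_one.neg

theorem associated_iff {x y : ℤ√(-2)} : Associated x y ↔ y = x ∨ y = -x := by
  constructor
  · rintro ⟨u, rfl⟩
    rcases isUnit_iff.1 u.isUnit with h | h <;> simp [h]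
  · rintro (rfl | rfl)
    · exact Associated.refl _
    · exact (Associated.refl x).neg_right

theorem one_lt_normNat_of_prime {q : ℤ√(-2)} (hq : Prime q) : 1 < normNat q := by
  have h1 := normNat_pos hq.ne_zero
  have h2 : normNat q ≠ 1 := fun h => hq.not_isUnit (Zsqrtd.norm_eq_one_iff.1 h)
  omega

/-- The elements of `ℤ[√-2]` of norm `n`. -/
noncomputable def normFinset (n : ℕ) : Finset (ℤ√(-2)) :=
  ((Finset.Icc (-n : ℤ) n ×ˢ Finset.Icc (-n : ℤ) n).image fun p => ⟨p.1, p.2⟩).filter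
    fun x => normNat x = n

theorem mem_normFinset {n : ℕ} {x : ℤ√(-2)} : x ∈ normFinset n ↔ normNat x = n := by
  refine ⟨fun h => (Finset.mem_filter.1 h).2, fun h => Finset.mem_filter.2 ⟨?_, h⟩⟩
  have h1 := coe_normNat x
  rw [h] at h1
  refine Finset.mem_image.2 ⟨(x.re, x.im), ?_, rfl⟩
  have key : ∀ a : ℤ, a ≤ a ^ 2 ∧ -a ≤ a ^ 2 := fun a =>
    ⟨Int.le_self_sq a, by simpa using Int.le_self_sq (-a)⟩
  rw [Finset.mem_product, Finset.mem_Icc, Finset.mem_Icc]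
  have h2 := key x.re
  have h3 := key x.im
  have h4 := sq_nonneg x.re
  have h5 := sq_nonneg x.im
  refine ⟨⟨?_, ?_⟩, ?_, ?_⟩ <;> simp only <;> linarith

open Classical in
/-- The prime elements of `ℤ[√-2]` of norm at most `B`. -/
noncomputable def primeFinset (B : ℕ) : Finset (ℤ√(-2)) :=
  ((Finset.range (B + 1)).biUnion normFinset).filter Prime

theorem mem_primeFinset {B : ℕ} {q : ℤ√(-2)} :
    q ∈ primeFinset B ↔ Prime q ∧ normNat q ≤ B := by
  simp [primeFinset, mem_normFinset, and_comm]

theorem sum_multiplicity_mul_log {x : ℤ√(-2)} (hx : x ≠ 0) {B : ℕ} (hB : normNat x ≤ B) :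
    ∑ q ∈ primeFinset B, (multiplicity q x : ℝ) * Real.log (normNat q) =
      2 * Real.log (normNat x) := by
  revert hx hB
  refine UniqueFactorizationMonoid.induction_on_prime x (fun h => absurd rfl h) ?_ ?_
  · intro u hu _ _
    have h1 : normNat u = 1 := Zsqrtd.norm_eq_one_iff.2 hu
    rw [h1, Nat.cast_one, Real.log_one, mul_zero]
    refine Finset.sum_eq_zero fun q hq => ?_
    rw [multiplicity_eq_zero.2 fun h => (mem_primeFinset.1 hq).1.not_isUnit
      (isUnit_of_dvd_unit h hu)]
    simp
  · intro a p ha hp ih _ hB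
    have hpa : p * a ≠ 0 := mul_ne_zero hp.ne_zero ha
    rw [normNat_mul] at hB ⊢
    have hp1 := normNat_pos hp.ne_zero
    have ha1 := normNat_pos ha
    have hmul : ∀ q ∈ primeFinset B, (multiplicity q (p * a) : ℝ) * Real.log (normNat q) =
        (multiplicity q p : ℝ) * Real.log (normNat q) +
          (multiplicity q a : ℝ) * Real.log (normNat q) := by
      intro q hq
      have hq' := (mem_primeFinset.1 hq).1
      rw [multiplicity_mul hq' (FiniteMultiplicity.of_not_isUnit hq'.not_isUnit hpa)]
      push_cast
      ring
    rw [Finset.sum_congr rfl hmul, Finset.sum_add_distrib,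
      ih ha (le_trans (Nat.le_mul_of_pos_left _ hp1) hB)]
    have hsub : ({p, -p} : Finset (ℤ√(-2))) ⊆ primeFinset B := by
      have hpB : normNat p ≤ B := le_trans (Nat.le_mul_of_pos_right _ ha1) hB
      intro q hq
      rw [Finset.mem_insert, Finset.mem_singleton] at hq
      rcases hq with rfl | rfl
      · exact mem_primeFinset.2 ⟨hp, hpB⟩
      · exact mem_primeFinset.2 ⟨hp.neg, by rwa [normNat_neg]⟩
    have hne : p ≠ -p := fun h => hp.ne_zero (self_eq_neg.1 h)
    rw [← Finset.sum_subset hsub, Finset.sum_pair hne, normNat_neg]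
    · have h1 : multiplicity p p = 1 := multiplicity_self
      have h2 : multiplicity (-p) p = 1 := by
        rw [multiplicity_eq_of_associated_left (Associated.refl p).neg_right]; exact h1
      rw [h1, h2, Nat.cast_mul, Real.log_mul (by positivity) (by positivity)]
      push_cast
      ring
    · intro q hq hq2
      rw [multiplicity_eq_zero.2]
      · simp
      · intro h
        apply hq2
        have := ((mem_primeFinset.1 hq).1.dvd_prime_iff_associated hp).1 h
        rw [Finset.mem_insert, Finset.mem_singleton]
        exact associated_iff.1 this.symm

theorem prime_of_normNat_prime {x : ℤ√(-2)} (hx : (normNat x).Prime) : Prime x := by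
  rw [← irreducible_iff_prime]
  refine ⟨fun h => hx.one_lt.ne' (Zsqrtd.norm_eq_one_iff.2 h), fun {a b} hab => ?_⟩
  rw [hab, normNat_mul, Nat.prime_mul_iff] at hx
  rcases hx with h | h
  · exact Or.inr (Zsqrtd.norm_eq_one_iff.1 h.2)
  · exact Or.inl (Zsqrtd.norm_eq_one_iff.1 h.2)

theorem prime_star {x : ℤ√(-2)} (hx : Prime x) : Prime (star x) :=
  (MulEquiv.prime_iff (starMulAut (R := ℤ√(-2)))).2 hx

theorem eq_or_of_normNat_pow_eq {p q : ℤ√(-2)} (hp : Prime p) (hq : Prime q) {i j : ℕ}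
    (hj : j ≠ 0) (h : normNat q ^ j = normNat p ^ i) :
    q = p ∨ q = -p ∨ q = star p ∨ q = -star p := by
  have h1 : q ∣ (p * star p) ^ i := by
    rw [← coe_normNat_eq_mul_star, ← Nat.cast_pow, ← h, Nat.cast_pow, coe_normNat_eq_mul_star]
    exact (Dvd.intro _ rfl : q ∣ q * star q).trans (dvd_pow_self _ hj)
  rcases hq.dvd_or_dvd (hq.dvd_of_dvd_pow h1) with h2 | h2
  · rcases associated_iff.1 ((hq.dvd_prime_iff_associated hp).1 h2).symm with h | h <;> simp [h]
  · rcases associated_iff.1 ((hq.dvd_prime_iff_associated (prime_star hp)).1 h2).symm with h | h <;>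
      simp [h]

theorem log_normNat_le {p : ℤ√(-2)} (hp : Prime p) {j : ℕ} (hj : j ≠ 0) :
    Real.log (normNat p) ≤ 2 * ArithmeticFunction.vonMangoldt (normNat p ^ j) := by
  obtain ⟨l, hl, hpl⟩ : ∃ l : ℕ, l.Prime ∧ p ∣ (l : ℤ√(-2)) := by
    have h1 : p ∣ ((normNat p).primeFactorsList.prod : ℤ√(-2)) := by
      rw [Nat.prod_primeFactorsList (normNat_pos hp.ne_zero).ne', coe_normNat_eq_mul_star]
      exact Dvd.intro _ rfl
    rw [Nat.cast_list_prod, hp.dvd_prod_iff] at h1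
    obtain ⟨a, ha, hpa⟩ := h1
    obtain ⟨l, hl, rfl⟩ := List.mem_map.1 ha
    exact ⟨l, Nat.prime_of_mem_primeFactorsList hl, hpa⟩
  obtain ⟨c, hc⟩ := hpl
  have h2 : normNat p ∣ l ^ 2 := by
    rw [sq, ← normNat_natCast, hc, normNat_mul]
    exact Dvd.intro _ rfl
  obtain ⟨i, hi, hpi⟩ := (Nat.dvd_prime_pow hl).1 h2
  have hi0 : i ≠ 0 := by
    rintro rfl
    have := one_lt_normNat_of_prime hp
    rw [hpi, pow_zero] at this
    exact lt_irrefl _ this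
  rw [hpi, ← pow_mul, ArithmeticFunction.vonMangoldt_apply_pow (mul_ne_zero hi0 hj),
    ArithmeticFunction.vonMangoldt_apply_prime hl, Nat.cast_pow, Real.log_pow]
  have : (i : ℝ) ≤ 2 := by exact_mod_cast hi
  exact mul_le_mul_of_nonneg_right this (Real.log_natCast_nonneg l)

theorem normFinset_eq_of_mem {l : ℕ} (hl : l.Prime) {p : ℤ√(-2)} (hp : normNat p = l) :
    normFinset l = {p, -p, star p, -star p} := by
  ext q
  rw [mem_normFinset]
  simp only [Finset.mem_insert, Finset.mem_singleton]
  constructor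
  · intro hq
    exact eq_or_of_normNat_pow_eq (i := 1) (prime_of_normNat_prime (hp ▸ hl))
      (prime_of_normNat_prime (hq ▸ hl)) one_ne_zero (by rw [hp, hq])
  · rintro (rfl | rfl | rfl | rfl) <;> simp [normNat_neg, normNat_star, hp]

theorem re_odd_of_odd {x : ℤ√(-2)} : Odd (normNat x) ↔ Odd x.re := by
  rw [← Int.odd_coe_nat, coe_normNat]
  simp [parity_simps]

theorem sum_normFinset_eq {E : Type*} [AddCommMonoid E] {l : ℕ} (hl : l.Prime) (h2 : Odd l)
    {p : ℤ√(-2)} (hp : normNat p = l) (f : ℤ√(-2) → E) :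
    ∑ x ∈ normFinset l, f x = f p + (f (-p) + (f (star p) + f (-star p))) := by
  have hre : p.re ≠ 0 := by
    intro h
    have := re_odd_of_odd.1 (hp ▸ h2)
    rw [h] at this
    exact absurd this (by decide)
  have him : p.im ≠ 0 := by
    intro h
    have h1 := coe_normNat p
    rw [h, hp] at h1
    have h3 : l = p.re.natAbs ^ 2 := by
      zify
      rw [h1, sq_abs]
      ring
    exact hl.prime.not_isSquare ⟨p.re.natAbs, by rw [h3, sq]⟩
  have e1 : p ≠ -p := fun h => by
    have := congrArg Zsqrtd.re h
    simp only [Zsqrtd.re_neg] at this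
    omega
  have e2 : p ≠ star p := fun h => by
    have := congrArg Zsqrtd.im h
    simp only [Zsqrtd.im_star] at this
    omega
  have e3 : p ≠ -star p := fun h => by
    have := congrArg Zsqrtd.re h
    simp only [Zsqrtd.re_neg, Zsqrtd.re_star] at this
    omega
  have e4 : -p ≠ star p := fun h => e3 (by rw [← h, neg_neg])
  have e5 : -p ≠ -star p := fun h => e2 (neg_injective h)
  have e6 : star p ≠ -star p := fun h => by
    have := congrArg Zsqrtd.re h
    simp only [Zsqrtd.re_neg, Zsqrtd.re_star] at this
    omega
  rw [normFinset_eq_of_mem hl hp, Finset.sum_insert (by simp [e1, e2, e3]),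
    Finset.sum_insert (by simp [e4, e5]), Finset.sum_insert (by simpa using e6),
    Finset.sum_singleton]

theorem exists_normNat_eq {l : ℕ} (hl : l.Prime) (h2 : l ≠ 2) (h : l % 8 = 1 ∨ l % 8 = 3) :
    ∃ p : ℤ√(-2), normNat p = l := by
  have := Fact.mk hl
  obtain ⟨s, hs⟩ := (ZMod.exists_sq_eq_neg_two_iff h2).2 h
  have h3 : (l : ℤ√(-2)) ∣ ⟨s.val, 1⟩ * ⟨s.val, -1⟩ := by
    have h4 : (l : ℤ) ∣ (s.val : ℤ) ^ 2 + 2 := by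
      rw [← ZMod.intCast_zmod_eq_zero_iff_dvd]
      push_cast
      rw [ZMod.natCast_zmod_val, sq, ← hs]
      ring
    obtain ⟨c, hc⟩ := h4
    refine ⟨c, ?_⟩
    ext
    · simp only [Zsqrtd.re_mul, Zsqrtd.re_natCast, Zsqrtd.re_intCast, Zsqrtd.im_natCast,
        Zsqrtd.im_intCast]
      linarith
    · simp only [Zsqrtd.im_mul, Zsqrtd.re_natCast, Zsqrtd.re_intCast, Zsqrtd.im_natCast,
        Zsqrtd.im_intCast]
      ring
  have hnp : ¬ Prime (l : ℤ√(-2)) := by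
    intro hp
    have key : ∀ e : ℤ, e ∣ 1 → ¬ (l : ℤ√(-2)) ∣ ⟨s.val, e⟩ := by
      intro e he hd
      rw [← Int.cast_natCast, Zsqrtd.intCast_dvd] at hd
      have := hd.2.trans he
      exact hl.one_lt.ne' (by exact_mod_cast Int.eq_one_of_dvd_one (by positivity) this)
    rcases hp.dvd_or_dvd h3 with h | h
    · exact key 1 dvd_rfl h
    · exact key (-1) (by norm_num) h
  rw [← irreducible_iff_prime, irreducible_iff] at hnp
  have hnu : ¬ IsUnit (l : ℤ√(-2)) := by
    intro h
    have h5 : normNat (l : ℤ√(-2)) = 1 := Zsqrtd.norm_eq_one_iff.2 h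
    rw [normNat_natCast] at h5
    exact hl.one_lt.ne' (Nat.eq_one_of_mul_eq_one_left h5)
  push Not at hnp
  obtain ⟨a, b, hab, ha, hb⟩ := hnp hnu
  refine ⟨a, ((hl.mul_eq_prime_sq_iff (mt Zsqrtd.norm_eq_one_iff.1 ha)
    (mt Zsqrtd.norm_eq_one_iff.1 hb)).1 ?_).1⟩
  change normNat a * normNat b = _
  rw [← normNat_mul, ← hab, normNat_natCast, sq]

theorem normNat_mod_eight {x : ℤ√(-2)} (hx : Odd (normNat x)) :
    (Even x.im → normNat x % 8 = 1) ∧ (Odd x.im → normNat x % 8 = 3) := by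
  have h1 := coe_normNat x
  have ha2 := Int.eight_dvd_sq_sub_one_of_odd (re_odd_of_odd.1 hx)
  constructor
  · rintro ⟨b, hb⟩
    have hb2 : x.im ^ 2 = 4 * b ^ 2 := by rw [hb]; ring
    omega
  · intro hb
    have hb2 := Int.eight_dvd_sq_sub_one_of_odd hb
    omega

end ZsqrtdNegTwo

end NormForm

section HeckeCoefficients

namespace ZsqrtdNegTwo

/-- The sum of `ψ` over the elements of norm `n`. -/
noncomputable def normSum (ψ : ℤ√(-2) →* ℂ) (n : ℕ) : ℂ := ∑ x ∈ normFinset n, ψ x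

/-- Twice the coefficients of the negative logarithmic derivative of the Dirichlet series with
coefficients `normSum ψ`. -/
noncomputable def primePowSum (ψ : ℤ√(-2) →* ℂ) (n : ℕ) : ℂ :=
  ∑ q ∈ primeFinset n, ∑ j ∈ Finset.Icc 1 n,
    if normNat q ^ j = n then ψ q ^ j * Real.log (normNat q) else 0

theorem primePowSum_eq_of_le (ψ : ℤ√(-2) →* ℂ) {m n : ℕ} (hmn : m ≤ n) :
    primePowSum ψ m = ∑ q ∈ primeFinset n, ∑ j ∈ Finset.Icc 1 n,
      if normNat q ^ j = m then ψ q ^ j * Real.log (normNat q) else 0 := by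
  have hsub : primeFinset m ⊆ primeFinset n := fun q hq =>
    mem_primeFinset.2 ⟨(mem_primeFinset.1 hq).1, (mem_primeFinset.1 hq).2.trans hmn⟩
  rw [← Finset.sum_subset hsub]
  · refine Finset.sum_congr rfl fun q hq => ?_
    refine Finset.sum_subset (Finset.Icc_subset_Icc_right hmn) fun j hj hj2 => if_neg fun h => ?_
    refine hj2 (Finset.mem_Icc.2 ⟨(Finset.mem_Icc.1 hj).1, ?_⟩)
    rw [← h]
    exact (Nat.lt_pow_self (one_lt_normNat_of_prime (mem_primeFinset.1 hq).1)).le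
  · intro q hq hq2
    refine Finset.sum_eq_zero fun j hj => if_neg fun h => hq2 ?_
    refine mem_primeFinset.2 ⟨(mem_primeFinset.1 hq).1, ?_⟩
    rw [← h]
    exact Nat.le_self_pow (Nat.one_le_iff_ne_zero.1 (Finset.mem_Icc.1 hj).1) _

theorem sum_divisorsAntidiagonal_normFinset {E : Type*} [AddCommMonoid E] (f : ℤ√(-2) → E)
    {d : ℤ√(-2)}
    (hd : d ≠ 0) {n : ℕ} (hn : n ≠ 0) :
    ∑ p ∈ n.divisorsAntidiagonal, (if normNat d = p.1 then ∑ x ∈ normFinset p.2, f (d * x) else 0) =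
      ∑ x ∈ normFinset n, (open Classical in if d ∣ x then f x else 0) := by
  classical
  have hd0 := normNat_pos hd
  rw [← Finset.sum_filter, ← Finset.sum_filter]
  by_cases hdn : normNat d ∣ n
  · obtain ⟨m, rfl⟩ := hdn
    have h1 : (normNat d * m).divisorsAntidiagonal.filter (fun p => normNat d = p.1) =
        {(normNat d, m)} := by
      ext ⟨a, b⟩
      simp only [Finset.mem_filter, Nat.mem_divisorsAntidiagonal, Finset.mem_singleton,
        Prod.mk.injEq]
      constructor
      · rintro ⟨⟨h, -⟩, rfl⟩
        exact ⟨rfl, Nat.eq_of_mul_eq_mul_left hd0 h⟩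
      · rintro ⟨rfl, rfl⟩
        exact ⟨⟨rfl, hn⟩, rfl⟩
    rw [h1, Finset.sum_singleton]
    refine Finset.sum_nbij (fun x => d * x) ?_ ?_ ?_ (fun _ _ => rfl)
    · intro x hx
      rw [Finset.mem_filter, mem_normFinset, normNat_mul, mem_normFinset.1 hx]
      exact ⟨rfl, Dvd.intro _ rfl⟩
    · intro x _ y _ h
      exact mul_left_cancel₀ hd h
    · intro x hx
      rw [Finset.mem_coe, Finset.mem_filter, mem_normFinset] at hx
      obtain ⟨hx, y, rfl⟩ := hx
      rw [normNat_mul] at hx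
      exact ⟨y, mem_normFinset.2 (Nat.eq_of_mul_eq_mul_left hd0 hx), rfl⟩
  · rw [Finset.sum_eq_zero, Finset.sum_eq_zero]
    · intro x hx
      rw [Finset.mem_filter, mem_normFinset] at hx
      obtain ⟨hx, y, rfl⟩ := hx
      exact absurd (hx ▸ normNat_mul d y ▸ Dvd.intro _ rfl) hdn
    · intro p hp
      rw [Finset.mem_filter, Nat.mem_divisorsAntidiagonal] at hp
      exact absurd (hp.2 ▸ hp.1.1 ▸ Dvd.intro _ rfl) hdn

theorem sum_primePowSum_mul_normSum (ψ : ℤ√(-2) →* ℂ) {n : ℕ} (hn : n ≠ 0) :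
    ∑ p ∈ n.divisorsAntidiagonal, primePowSum ψ p.1 * normSum ψ p.2 =
      2 * Real.log n * normSum ψ n := by
  classical
  have h1 : ∀ p ∈ n.divisorsAntidiagonal, primePowSum ψ p.1 * normSum ψ p.2 =
      ∑ q ∈ primeFinset n, ∑ j ∈ Finset.Icc 1 n, if normNat (q ^ j) = p.1 then
        ∑ x ∈ normFinset p.2, ψ (q ^ j * x) * Real.log (normNat q) else 0 := by
    intro p hp
    rw [primePowSum_eq_of_le ψ (Nat.divisor_le (Nat.fst_mem_divisors_of_mem_antidiagonal hp)),
      Finset.sum_mul]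
    refine Finset.sum_congr rfl fun q _ => ?_
    rw [Finset.sum_mul]
    refine Finset.sum_congr rfl fun j _ => ?_
    rw [normNat_pow, ite_mul, zero_mul, normSum, Finset.mul_sum]
    congr 1
    refine Finset.sum_congr rfl fun x _ => ?_
    rw [map_mul, map_pow]
    ring
  rw [Finset.sum_congr rfl h1, normSum, Finset.mul_sum]
  have h2 : ∀ x ∈ normFinset n, 2 * (Real.log n : ℂ) * ψ x =
      ∑ q ∈ primeFinset n, ∑ j ∈ Finset.Icc 1 n,
        if q ^ j ∣ x then ψ x * Real.log (normNat q) else 0 := by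
    intro x hx
    rw [mem_normFinset] at hx
    have hx0 : x ≠ 0 := by
      rintro rfl
      exact hn (by rw [← hx]; rfl)
    have h := sum_multiplicity_mul_log hx0 hx.le
    rw [hx] at h
    have h' : 2 * (Real.log n : ℂ) =
        ∑ q ∈ primeFinset n, (multiplicity q x : ℂ) * Real.log (normNat q) := by
      exact_mod_cast h.symm
    rw [h', Finset.sum_mul]
    refine Finset.sum_congr rfl fun q hq => ?_
    have hq' := (mem_primeFinset.1 hq).1
    have hfin := FiniteMultiplicity.of_not_isUnit hq'.not_isUnit hx0
    rw [← Finset.sum_filter, Finset.sum_const]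
    have hcard : (Finset.Icc 1 n).filter (fun j => q ^ j ∣ x) =
        Finset.Icc 1 (multiplicity q x) := by
      ext j
      rw [Finset.mem_filter, Finset.mem_Icc, Finset.mem_Icc, hfin.pow_dvd_iff_le_multiplicity]
      refine ⟨fun h => ⟨h.1.1, h.2⟩, fun h => ⟨⟨h.1, h.2.trans ?_⟩, h.2⟩⟩
      obtain ⟨c, hc⟩ := pow_multiplicity_dvd q x
      have hle : normNat q ^ multiplicity q x ≤ n := by
        rw [← hx]
        conv_rhs => rw [hc]
        rw [normNat_mul, normNat_pow]
        refine Nat.le_mul_of_pos_right _ (normNat_pos ?_)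
        rintro rfl
        exact hx0 (by rw [hc, mul_zero])
      exact (Nat.lt_pow_self (one_lt_normNat_of_prime hq')).le.trans hle
    rw [hcard, Nat.card_Icc, Nat.add_sub_cancel, nsmul_eq_mul]
    ring
  rw [Finset.sum_congr rfl h2, Finset.sum_comm (s := n.divisorsAntidiagonal),
    Finset.sum_comm (s := normFinset n)]
  refine Finset.sum_congr rfl fun q hq => ?_
  rw [Finset.sum_comm (s := n.divisorsAntidiagonal), Finset.sum_comm (s := normFinset n)]
  refine Finset.sum_congr rfl fun j _ => ?_
  exact sum_divisorsAntidiagonal_normFinset (fun x => ψ x * Real.log (normNat q))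
    (pow_ne_zero j (mem_primeFinset.1 hq).1.ne_zero) hn

theorem primePowSum_apply_prime (ψ : ℤ√(-2) →* ℂ) {l : ℕ} (hl : l.Prime) :
    primePowSum ψ l = normSum ψ l * Real.log l := by
  classical
  have hsub : normFinset l ⊆ primeFinset l := fun q hq => by
    rw [mem_normFinset] at hq
    exact mem_primeFinset.2 ⟨prime_of_normNat_prime (hq ▸ hl), hq.le⟩
  rw [primePowSum, normSum, Finset.sum_mul, ← Finset.sum_subset hsub]
  · refine Finset.sum_congr rfl fun q hq => ?_
    rw [mem_normFinset] at hq
    rw [Finset.sum_eq_single_of_mem 1 (Finset.mem_Icc.2 ⟨le_rfl, hl.one_le⟩)]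
    · rw [pow_one, pow_one, if_pos hq, hq]
    · intro j _ hj
      rw [hq, if_neg]
      intro h
      exact hj (Nat.pow_right_injective hl.two_le (h.trans (pow_one l).symm))
  · intro q hq hq2
    refine Finset.sum_eq_zero fun j hj => if_neg fun h => hq2 ?_
    have hj1 : j = 1 := (Nat.Prime.eq_one_of_pow (h ▸ hl))
    rw [hj1, pow_one] at h
    exact mem_normFinset.2 h

theorem norm_primePowSum_le {ψ : ℤ√(-2) →* ℂ} (hψ : ∀ x, ‖ψ x‖ ≤ 1) (n : ℕ) :
    ‖primePowSum ψ n‖ ≤ 8 * ArithmeticFunction.vonMangoldt n := by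
  classical
  have hterm : ∀ q ∈ primeFinset n, ∀ j ∈ Finset.Icc 1 n,
      ‖(if normNat q ^ j = n then ψ q ^ j * (Real.log (normNat q) : ℂ) else 0)‖ ≤
        if normNat q ^ j = n then 2 * ArithmeticFunction.vonMangoldt n else 0 := by
    intro q hq j hj
    split_ifs with h
    · rw [norm_mul, norm_pow, Complex.norm_real, Real.norm_of_nonneg (Real.log_natCast_nonneg _)]
      have h1 := log_normNat_le (mem_primeFinset.1 hq).1
        (Nat.one_le_iff_ne_zero.1 (Finset.mem_Icc.1 hj).1)
      rw [h] at h1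
      exact (mul_le_of_le_one_left (Real.log_natCast_nonneg _)
        (pow_le_one₀ (_root_.norm_nonneg _) (hψ q))).trans h1
    · simp
  have h2 : ‖primePowSum ψ n‖ ≤ ∑ p ∈ primeFinset n ×ˢ Finset.Icc 1 n,
      if normNat p.1 ^ p.2 = n then 2 * ArithmeticFunction.vonMangoldt n else 0 := by
    rw [Finset.sum_product]
    exact (norm_sum_le _ _).trans (Finset.sum_le_sum fun q hq =>
      (norm_sum_le _ _).trans (Finset.sum_le_sum (hterm q hq)))
  refine h2.trans ?_
  rw [← Finset.sum_filter, Finset.sum_const, nsmul_eq_mul]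
  set S := (primeFinset n ×ˢ Finset.Icc 1 n).filter fun p => normNat p.1 ^ p.2 = n with hS
  have hcard : S.card ≤ 4 := by
    rcases S.eq_empty_or_nonempty with h | ⟨⟨p, i⟩, hp⟩
    · simp [h]
    · have hp' := Finset.mem_filter.1 hp
      rw [Finset.mem_product, mem_primeFinset, Finset.mem_Icc] at hp'
      have hsub : S ⊆ ({p, -p, star p, -star p} : Finset (ℤ√(-2))).image fun q => (q, i) := by
        rintro ⟨q, j⟩ hq
        have hq' := Finset.mem_filter.1 hq
        rw [Finset.mem_product, mem_primeFinset, Finset.mem_Icc] at hq'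
        have hqp := eq_or_of_normNat_pow_eq hp'.1.1.1 hq'.1.1.1
          (Nat.one_le_iff_ne_zero.1 hq'.1.2.1) (hq'.2.trans hp'.2.symm)
        have hnorm : normNat q = normNat p := by
          rcases hqp with rfl | rfl | rfl | rfl <;> simp [normNat_neg, normNat_star]
        have hji : j = i := by
          have h := hq'.2.trans hp'.2.symm
          simp only [hnorm] at h
          exact Nat.pow_right_injective (one_lt_normNat_of_prime hp'.1.1.1) h
        rw [Finset.mem_image]
        exact ⟨q, by simpa using hqp, by rw [hji]⟩
      exact (Finset.card_le_card hsub).trans (Finset.card_image_le.trans Finset.card_le_four)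
  have h4 : (S.card : ℝ) ≤ 4 := by exact_mod_cast hcard
  have h5 : (0 : ℝ) ≤ ArithmeticFunction.vonMangoldt n := ArithmeticFunction.vonMangoldt_nonneg
  nlinarith [mul_le_mul_of_nonneg_right h4 h5]

theorem re_primePowSum_nonneg {ψ₀ ψ ψ₂ : ℤ√(-2) →* ℂ}
    (h : ∀ x, (ψ₀ x = 0 ∧ ψ x = 0) ∨ (ψ₀ x = 1 ∧ ‖ψ x‖ = 1)) (h₂ : ∀ x, ψ₂ x = ψ x ^ 2)
    (n : ℕ) {w : ℂ} (hw : ‖w‖ = 1) :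
    0 ≤ (3 * primePowSum ψ₀ n + 4 * (primePowSum ψ n * w) + primePowSum ψ₂ n * w ^ 2).re := by
  have key : ∀ z : ℂ, ‖z‖ = 1 → 0 ≤ (3 + 4 * z + z ^ 2).re := by
    intro z hz
    have h1 : z.re ^ 2 + z.im ^ 2 = 1 := by
      have := Complex.sq_norm z
      rw [hz, Complex.normSq_apply] at this
      linarith
    have h2 : (3 + 4 * z + z ^ 2).re = 3 + 4 * z.re + (z.re ^ 2 - z.im ^ 2) := by
      simp [sq]
    rw [h2]
    nlinarith [sq_nonneg (z.re + 1)]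
  simp only [primePowSum]
  rw [Finset.mul_sum, Finset.sum_mul, Finset.sum_mul, Finset.mul_sum, ← Finset.sum_add_distrib,
    ← Finset.sum_add_distrib, Complex.re_sum]
  refine Finset.sum_nonneg fun q _ => ?_
  rw [Finset.mul_sum, Finset.sum_mul, Finset.sum_mul, Finset.mul_sum, ← Finset.sum_add_distrib,
    ← Finset.sum_add_distrib, Complex.re_sum]
  refine Finset.sum_nonneg fun j hj => ?_
  have hj0 : j ≠ 0 := Nat.one_le_iff_ne_zero.1 (Finset.mem_Icc.1 hj).1
  split_ifs with hn
  · rcases h q with ⟨h0, h1⟩ | ⟨h0, h1⟩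
    · simp [h0, h1, h₂, hj0]
    · have h3 := key (ψ q ^ j * w) (by rw [norm_mul, norm_pow, h1, hw, one_pow, one_mul])
      rw [h₂, h0, one_pow, one_mul]
      have : 3 * (Real.log (normNat q) : ℂ) + 4 * (ψ q ^ j * (Real.log (normNat q) : ℂ) * w) +
          (ψ q ^ 2) ^ j * (Real.log (normNat q) : ℂ) * w ^ 2 =
          (Real.log (normNat q) : ℂ) * (3 + 4 * (ψ q ^ j * w) + (ψ q ^ j * w) ^ 2) := by ring
      rw [this, Complex.re_ofReal_mul]
      exact mul_nonneg (Real.log_natCast_nonneg _) h3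
  · simp

end ZsqrtdNegTwo

end HeckeCoefficients

section PartialSums

theorem Int.filter_Icc_sq_le {T : ℕ} {c : ℤ} (hc : c ≤ T) :
    (Finset.Icc (-T : ℤ) T).filter (fun x => x ^ 2 ≤ c) =
      if 0 ≤ c then Finset.Icc (-(Int.sqrt c)) (Int.sqrt c) else ∅ := by
  ext x
  split_ifs with h
  · rw [Finset.mem_filter, Finset.mem_Icc, Finset.mem_Icc]
    obtain ⟨m, rfl⟩ := Int.eq_ofNat_of_zero_le h
    have key : x ^ 2 ≤ (m : ℤ) ↔ -(Int.sqrt m) ≤ x ∧ x ≤ Int.sqrt m := by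
      rw [← abs_le, Int.sqrt_natCast, Int.abs_eq_natAbs, Nat.cast_le, Nat.le_sqrt', ← sq_abs,
        Int.abs_eq_natAbs]
      norm_cast
    rw [key, and_iff_right_iff_imp, ← key]
    intro hx
    have h1 := Int.le_self_sq x
    have h2 := Int.le_self_sq (-x)
    rw [neg_sq] at h2
    constructor <;> linarith
  · rw [Finset.mem_filter]
    simp only [Finset.notMem_empty, iff_false, not_and]
    intro _ h2
    exact h ((sq_nonneg x).trans h2)

theorem norm_sum_Icc_shift_sub_le {g : ℤ → ℂ} (hg : ∀ x, ‖g x‖ ≤ 1) {a b : ℤ} (hab : a ≤ b) :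
    ‖∑ x ∈ Finset.Icc a b, (g (x + 1) - g x)‖ ≤ 2 := by
  have h : ∀ n : ℕ, ∑ x ∈ Finset.Icc a (a + n), (g (x + 1) - g x) = g (a + n + 1) - g a := by
    intro n
    induction n with
    | zero => simp
    | succ n ih =>
      have : Finset.Icc a (a + (n + 1 : ℕ)) = insert (a + n + 1) (Finset.Icc a (a + n)) := by
        ext x
        simp only [Finset.mem_Icc, Finset.mem_insert]
        push_cast
        omega
      rw [this, Finset.sum_insert (by simp), ih]
      push_cast
      ring_nf
  obtain ⟨n, rfl⟩ := Int.le.dest hab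
  rw [h]
  calc _ ≤ ‖g (a + n + 1)‖ + ‖g a‖ := norm_sub_le _ _
    _ ≤ 1 + 1 := add_le_add (hg _) (hg _)
    _ = 2 := by norm_num

theorem norm_sum_filter_shift_sub_le {g : ℤ → ℂ} (hg : ∀ x, ‖g x‖ ≤ 1) {T : ℕ} {c : ℤ}
    (hc : c ≤ T) :
    ‖∑ x ∈ Finset.Icc (-T : ℤ) T, if x ^ 2 ≤ c then g (x + 1) - g x else 0‖ ≤
      if 0 ≤ c then 2 else 0 := by
  rw [← Finset.sum_filter, Int.filter_Icc_sq_le hc]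
  split_ifs with h
  · exact norm_sum_Icc_shift_sub_le hg (by have := Int.sqrt_nonneg c; omega)
  · simp

theorem card_filter_sq_le (T : ℕ) :
    (((Finset.Icc (-T : ℤ) T).filter fun x => x ^ 2 ≤ (T : ℤ)).card : ℝ) ≤
      2 * Real.sqrt T + 1 := by
  rw [Int.filter_Icc_sq_le le_rfl, if_pos (by positivity), Int.card_Icc, Int.sqrt_natCast]
  have h1 : ((T.sqrt : ℤ) + 1 - -(T.sqrt : ℤ)).toNat = 2 * T.sqrt + 1 := by omega
  rw [h1]
  push_cast
  have h2 : (T.sqrt : ℝ) ≤ Real.sqrt T := Real.nat_sqrt_le_real_sqrt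
  linarith

/-- The integer points of the ellipse `x² + 2y² ≤ T`. -/
noncomputable def ellipsePoints (T : ℕ) : Finset (ℤ × ℤ) :=
  (Finset.Icc (-T : ℤ) T ×ˢ Finset.Icc (-T : ℤ) T).filter fun p => p.1 ^ 2 + 2 * p.2 ^ 2 ≤ T

theorem norm_sum_ellipsePoints_shift_fst_sub_le {f : ℤ → ℤ → ℂ} (hf : ∀ x y, ‖f x y‖ ≤ 1) (T : ℕ) :
    ‖∑ p ∈ ellipsePoints T, (f (p.1 + 1) p.2 - f p.1 p.2)‖ ≤ 2 * (2 * Real.sqrt T + 1) := by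
  rw [ellipsePoints, Finset.sum_filter, Finset.sum_product_right]
  calc _ ≤ ∑ y ∈ Finset.Icc (-T : ℤ) T, if y ^ 2 ≤ (T : ℤ) then (2 : ℝ) else 0 := by
        refine (norm_sum_le _ _).trans (Finset.sum_le_sum fun y _ => ?_)
        have h := norm_sum_filter_shift_sub_le (fun x => hf x y) (T := T) (c := T - 2 * y ^ 2)
          (by nlinarith [sq_nonneg y])
        simp only [le_sub_iff_add_le] at h
        refine h.trans ?_
        split_ifs with h1 h2 h2
        · exact le_rfl
        · nlinarith [sq_nonneg y]
        · exact zero_le_two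
        · exact le_rfl
    _ ≤ 2 * (2 * Real.sqrt T + 1) := by
        rw [← Finset.sum_filter, Finset.sum_const, nsmul_eq_mul, mul_comm]
        exact mul_le_mul_of_nonneg_left (card_filter_sq_le T) zero_le_two

theorem norm_sum_ellipsePoints_shift_snd_sub_le {f : ℤ → ℤ → ℂ} (hf : ∀ x y, ‖f x y‖ ≤ 1) (T : ℕ) :
    ‖∑ p ∈ ellipsePoints T, (f p.1 (p.2 + 1) - f p.1 p.2)‖ ≤ 2 * (2 * Real.sqrt T + 1) := by
  rw [ellipsePoints, Finset.sum_filter, Finset.sum_product]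
  calc _ ≤ ∑ x ∈ Finset.Icc (-T : ℤ) T, if x ^ 2 ≤ (T : ℤ) then (2 : ℝ) else 0 := by
        refine (norm_sum_le _ _).trans (Finset.sum_le_sum fun x _ => ?_)
        have h := norm_sum_filter_shift_sub_le (hf x) (T := T) (c := (T - x ^ 2) / 2)
          (by have := sq_nonneg x; omega)
        have e : ∀ y : ℤ, y ^ 2 ≤ (T - x ^ 2) / 2 ↔ x ^ 2 + 2 * y ^ 2 ≤ T := fun y => by omega
        simp only [e] at h
        refine h.trans ?_
        split_ifs with h1 h2 h2
        · exact le_rfl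
        · omega
        · exact zero_le_two
        · exact le_rfl
    _ ≤ 2 * (2 * Real.sqrt T + 1) := by
        rw [← Finset.sum_filter, Finset.sum_const, nsmul_eq_mul, mul_comm]
        exact mul_le_mul_of_nonneg_left (card_filter_sq_le T) zero_le_two

theorem norm_sum_ellipsePoints_shift_sub_le {f : ℤ → ℤ → ℂ} (hf : ∀ x y, ‖f x y‖ ≤ 1) (T a b : ℕ) :
    ‖∑ p ∈ ellipsePoints T, f (p.1 + a) (p.2 + b) - ∑ p ∈ ellipsePoints T, f p.1 p.2‖ ≤
      (a + b) * (2 * (2 * Real.sqrt T + 1)) := by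
  induction a with
  | zero =>
    induction b with
    | zero => simp
    | succ b ih =>
      have h := norm_sum_ellipsePoints_shift_snd_sub_le (f := fun x y => f (x + (0 : ℕ)) (y + b))
        (fun x y => hf _ _) T
      rw [Finset.sum_sub_distrib] at h
      refine (norm_sub_le_norm_sub_add_norm_sub _
        (∑ p ∈ ellipsePoints T, f (p.1 + (0 : ℕ)) (p.2 + b)) _).trans ?_
      push_cast at h ih ⊢
      simp only [add_right_comm _ (1 : ℤ), ← add_assoc] at h ⊢
      linarith
  | succ a ih =>
    have h := norm_sum_ellipsePoints_shift_fst_sub_le (f := fun x y => f (x + a) (y + b))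
      (fun x y => hf _ _) T
    rw [Finset.sum_sub_distrib] at h
    refine (norm_sub_le_norm_sub_add_norm_sub _
      (∑ p ∈ ellipsePoints T, f (p.1 + a) (p.2 + b)) _).trans ?_
    push_cast at h ih ⊢
    simp only [add_right_comm _ (1 : ℤ), ← add_assoc] at h ⊢
    linarith

/-- A bounded function on `ℤ²` whose sum over every translate of an `M × M` square vanishes has
small sums over ellipses. -/
theorem norm_sum_ellipsePoints_le {f : ℤ → ℤ → ℂ} (hf : ∀ x y, ‖f x y‖ ≤ 1) {M : ℕ} (hM : 0 < M)
    (hsum : ∀ x y, ∑ a ∈ Finset.range M, ∑ b ∈ Finset.range M, f (x + a) (y + b) = 0) (T : ℕ) :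
    ‖∑ p ∈ ellipsePoints T, f p.1 p.2‖ ≤ 2 * M * (2 * (2 * Real.sqrt T + 1)) := by
  set C := 2 * (2 * Real.sqrt T + 1) with hC
  have hC0 : 0 ≤ C := by positivity
  have h1 : ∑ a ∈ Finset.range M, ∑ b ∈ Finset.range M,
      (∑ p ∈ ellipsePoints T, f (p.1 + a) (p.2 + b) - ∑ p ∈ ellipsePoints T, f p.1 p.2) =
      -((M : ℂ) * M * ∑ p ∈ ellipsePoints T, f p.1 p.2) := by
    simp only [Finset.sum_sub_distrib, Finset.sum_const, Finset.card_range, nsmul_eq_mul]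
    have : ∑ a ∈ Finset.range M, ∑ b ∈ Finset.range M,
        ∑ p ∈ ellipsePoints T, f (p.1 + a) (p.2 + b) = 0 := by
      simp only [Finset.sum_comm (s := Finset.range M) (t := ellipsePoints T)]
      exact Finset.sum_eq_zero fun p _ => hsum _ _
    rw [this]
    ring
  have h2 : ‖∑ a ∈ Finset.range M, ∑ b ∈ Finset.range M,
      (∑ p ∈ ellipsePoints T, f (p.1 + a) (p.2 + b) - ∑ p ∈ ellipsePoints T, f p.1 p.2)‖ ≤
      ∑ a ∈ Finset.range M, ∑ b ∈ Finset.range M, 2 * M * C := by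
    refine (norm_sum_le _ _).trans (Finset.sum_le_sum fun a ha => ?_)
    refine (norm_sum_le _ _).trans (Finset.sum_le_sum fun b hb => ?_)
    refine (norm_sum_ellipsePoints_shift_sub_le hf T a b).trans ?_
    have ha' : (a : ℝ) ≤ M := by exact_mod_cast (Finset.mem_range.1 ha).le
    have hb' : (b : ℝ) ≤ M := by exact_mod_cast (Finset.mem_range.1 hb).le
    exact mul_le_mul_of_nonneg_right (by linarith) hC0
  rw [h1, norm_neg, norm_mul, norm_mul, Complex.norm_natCast] at h2
  simp only [Finset.sum_const, Finset.card_range, nsmul_eq_mul] at h2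
  have hM' : (0 : ℝ) < M := by exact_mod_cast hM
  rw [mul_assoc, mul_le_mul_iff_right₀ hM', mul_le_mul_iff_right₀ hM'] at h2
  exact h2

theorem card_ellipsePoints_le (T : ℕ) :
    ((ellipsePoints T).card : ℝ) ≤ (2 * Real.sqrt T + 1) ^ 2 := by
  set F := (Finset.Icc (-T : ℤ) T).filter fun x => x ^ 2 ≤ (T : ℤ) with hF
  have hsub : ellipsePoints T ⊆ F ×ˢ F := by
    intro p hp
    have hp' := Finset.mem_filter.1 hp
    rw [Finset.mem_product] at hp'
    rw [Finset.mem_product, hF, Finset.mem_filter, Finset.mem_filter]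
    have h1 := sq_nonneg p.1
    have h2 := sq_nonneg p.2
    exact ⟨⟨hp'.1.1, by linarith⟩, hp'.1.2, by linarith⟩
  have h := Finset.card_le_card hsub
  rw [Finset.card_product] at h
  calc ((ellipsePoints T).card : ℝ) ≤ (F.card : ℝ) * F.card := by exact_mod_cast h
    _ ≤ (2 * Real.sqrt T + 1) ^ 2 := by
      rw [sq]
      exact mul_le_mul (card_filter_sq_le T) (card_filter_sq_le T) (by positivity) (by positivity)

namespace ZsqrtdNegTwo

theorem sum_normFinset_eq_sum_ellipsePoints {E : Type*} [AddCommMonoid E] {f : ℤ√(-2) → E}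
    (h0 : f 0 = 0) (T : ℕ) :
    ∑ n ∈ Finset.Icc 1 T, ∑ x ∈ normFinset n, f x = ∑ p ∈ ellipsePoints T, f ⟨p.1, p.2⟩ := by
  classical
  have hdisj : Set.PairwiseDisjoint (↑(Finset.Icc 0 T)) normFinset := by
    intro m _ n _ hmn
    refine Finset.disjoint_left.2 fun x hx hx2 => hmn ?_
    rw [← mem_normFinset.1 hx, ← mem_normFinset.1 hx2]
  have h1 : ∑ n ∈ Finset.Icc 1 T, ∑ x ∈ normFinset n, f x =
      ∑ n ∈ Finset.Icc 0 T, ∑ x ∈ normFinset n, f x := by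
    refine Finset.sum_subset (Finset.Icc_subset_Icc_left zero_le_one) fun n hn hn2 => ?_
    have hn0 : n = 0 := by
      rw [Finset.mem_Icc] at hn hn2
      omega
    refine Finset.sum_eq_zero fun x hx => ?_
    rw [mem_normFinset, hn0] at hx
    have hx0 : x = 0 := by
      by_contra h
      exact (normNat_pos h).ne' hx
    rw [hx0, h0]
  rw [h1, ← Finset.sum_biUnion hdisj]
  refine Finset.sum_bij' (fun x _ => (x.re, x.im)) (fun p _ => ⟨p.1, p.2⟩) ?_ ?_
    (fun _ _ => rfl) (fun _ _ => rfl) (fun _ _ => rfl)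
  · intro x hx
    simp only [Finset.mem_biUnion, Finset.mem_Icc, mem_normFinset] at hx
    obtain ⟨n, ⟨-, hn⟩, hx⟩ := hx
    have h2 := coe_normNat x
    rw [hx] at h2
    have hn' : (n : ℤ) ≤ T := by exact_mod_cast hn
    have a1 := Int.le_self_sq x.re
    have a2 := Int.le_self_sq (-x.re)
    have a3 := Int.le_self_sq x.im
    have a4 := Int.le_self_sq (-x.im)
    have a5 := sq_nonneg x.re
    have a6 := sq_nonneg x.im
    rw [neg_sq] at a2 a4
    rw [ellipsePoints, Finset.mem_filter, Finset.mem_product, Finset.mem_Icc, Finset.mem_Icc]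
    refine ⟨⟨⟨?_, ?_⟩, ?_, ?_⟩, ?_⟩ <;> simp only <;> linarith
  · intro p hp
    have hp' := (Finset.mem_filter.1 hp).2
    simp only [Finset.mem_biUnion, Finset.mem_Icc, mem_normFinset]
    refine ⟨_, ⟨Nat.zero_le _, ?_⟩, rfl⟩
    have h2 := coe_normNat ⟨p.1, p.2⟩
    exact_mod_cast h2.trans_le hp'

end ZsqrtdNegTwo

end PartialSums

section RingClassCharacters

namespace ZsqrtdNegTwo

/-- The ring `ℤ[√-2] / 2ᵏ`. -/
abbrev ResidueRing (k : ℕ) : Type := QuadraticAlgebra (ZMod (2 ^ k)) (-2) 0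

instance (k : ℕ) : Finite (ResidueRing k) := Finite.of_equiv _ (QuadraticAlgebra.equivProd _ _).symm

/-- The reduction map modulo `2ᵏ`. -/
def reduction (k : ℕ) : ℤ√(-2) →+* ResidueRing k where
  toFun x := ⟨x.re, x.im⟩
  map_one' := by ext <;> simp [QuadraticAlgebra.re_one, QuadraticAlgebra.im_one]
  map_mul' x y := by ext <;> simp
  map_zero' := by ext <;> simp
  map_add' x y := by ext <;> simp

theorem isUnit_reduction_iff {k : ℕ} (hk : 1 ≤ k) (x : ℤ√(-2)) :
    IsUnit (reduction k x) ↔ Odd x.re := by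
  rw [QuadraticAlgebra.isUnit_iff_norm_isUnit]
  have h : (reduction k x).norm = ((x.re * x.re + 2 * x.im * x.im : ℤ) : ZMod (2 ^ k)) := by
    rw [QuadraticAlgebra.norm_def]
    simp [reduction]
  rw [h, ZMod.coe_int_isUnit_iff_isCoprime, Nat.cast_pow, IsCoprime.pow_left_iff hk, Nat.cast_ofNat,
    Int.isCoprime_two_left, mul_assoc, Int.odd_add, iff_true_right (even_two_mul _), Int.odd_mul,
    and_self]

/-- The units of `ℤ[√-2] / 2ᵏ` modulo those of `ℤ / 2ᵏ`. -/
def RingClassGroup (k : ℕ) : Type :=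
  (ResidueRing k)ˣ ⧸
    (Units.map (algebraMap (ZMod (2 ^ k)) (ResidueRing k)).toMonoidHom).range

noncomputable instance (k : ℕ) : CommGroup (RingClassGroup k) :=
  inferInstanceAs (CommGroup (_ ⧸ _))

instance (k : ℕ) : Finite (RingClassGroup k) := inferInstanceAs (Finite (_ ⧸ _))

/-- The class of a unit in the ring class group. -/
noncomputable def ringClass (k : ℕ) : (ResidueRing k)ˣ →* RingClassGroup k := QuotientGroup.mk' _

theorem ringClass_eq_iff {k : ℕ} {u v : (ResidueRing k)ˣ} :
    ringClass k u = ringClass k v ↔ ∃ c : (ZMod (2 ^ k))ˣ,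
      (v : ResidueRing k) = u * algebraMap (ZMod (2 ^ k)) (ResidueRing k) c := by
  refine QuotientGroup.eq.trans ?_
  constructor
  · rintro ⟨c, hc⟩
    refine ⟨c, ?_⟩
    rw [← mul_inv_cancel_left u v, ← hc]
    rfl
  · rintro ⟨c, hc⟩
    refine ⟨c, ?_⟩
    rw [eq_inv_mul_iff_mul_eq]
    exact Units.ext hc.symm

theorem card_ringClassGroup {k : ℕ} (hk : 1 ≤ k) : Nat.card (RingClassGroup k) = 2 ^ k := by
  have hu : ∀ t : ZMod (2 ^ k), IsUnit (⟨1, t⟩ : ResidueRing k) := fun t => by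
    obtain ⟨m, rfl⟩ := ZMod.intCast_surjective t
    have := (isUnit_reduction_iff hk ⟨1, m⟩).2 odd_one
    simpa [reduction] using this
  rw [← Nat.card_zmod (2 ^ k)]
  symm
  refine Nat.card_congr (Equiv.ofBijective (fun t => ringClass k (hu t).unit) ⟨?_, ?_⟩)
  · intro s t hst
    obtain ⟨c, hc⟩ := ringClass_eq_iff.1 hst
    simp only [IsUnit.unit_spec, QuadraticAlgebra.algebraMap_eq, QuadraticAlgebra.ext_iff,
      QuadraticAlgebra.re_mul, QuadraticAlgebra.im_mul] at hc
    simp only [mul_zero, add_zero, zero_add, one_mul] at hc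
    rw [hc.2, ← hc.1, mul_one]
  · intro g
    obtain ⟨u, rfl⟩ := QuotientGroup.mk_surjective g
    have ha : IsUnit (u : ResidueRing k).re := by
      obtain ⟨a, ha⟩ := ZMod.intCast_surjective (u : ResidueRing k).re
      obtain ⟨b, hb⟩ := ZMod.intCast_surjective (u : ResidueRing k).im
      have h1 : reduction k ⟨a, b⟩ = u := QuadraticAlgebra.ext ha hb
      have h2 := (isUnit_reduction_iff hk ⟨a, b⟩).1 (h1 ▸ u.isUnit)
      have h3 := (isUnit_reduction_iff hk ⟨a, 0⟩).2 h2
      rw [QuadraticAlgebra.isUnit_iff_norm_isUnit, QuadraticAlgebra.norm_def] at h3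
      simp only [reduction, RingHom.coe_mk, MonoidHom.coe_mk, OneHom.coe_mk, Int.cast_zero,
        mul_zero, add_zero, sub_zero, ha] at h3
      exact isUnit_of_mul_isUnit_left h3
    refine ⟨ha.unit⁻¹ * (u : ResidueRing k).im, ringClass_eq_iff.2 ⟨ha.unit, ?_⟩⟩
    simp only [IsUnit.unit_spec, QuadraticAlgebra.algebraMap_eq, QuadraticAlgebra.ext_iff,
      QuadraticAlgebra.re_mul, QuadraticAlgebra.im_mul]
    simp only [mul_zero, add_zero, zero_add, one_mul]
    refine ⟨trivial, ?_⟩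
    rw [mul_right_comm, IsUnit.val_inv_mul, one_mul]

noncomputable instance (k : ℕ) : Fintype (RingClassGroup k) := Fintype.ofFinite _

/-- The character of `ℤ[√-2]` attached to a character of the ring class group of conductor `2ᵏ`,
extended by zero. -/
noncomputable def ringClassCharacter (k : ℕ) (φ : AddChar (Additive (RingClassGroup k)) ℂ) :
    ℤ√(-2) →* ℂ :=
  (MulChar.ofUnitHom ((MonoidHom.toHomUnits
    { toFun := fun g => φ (Additive.ofMul g)
      map_one' := φ.map_zero_eq_one
      map_mul' := fun _ _ => φ.map_add_eq_mul _ _ : RingClassGroup k →* ℂ }).comp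
        (ringClass k))).toMonoidHom.comp (reduction k).toMonoidHom

variable {k : ℕ} (φ : AddChar (Additive (RingClassGroup k)) ℂ)

theorem ringClassCharacter_apply {x : ℤ√(-2)} {u : (ResidueRing k)ˣ} (hu : u = reduction k x) :
    ringClassCharacter k φ x = φ (Additive.ofMul (ringClass k u)) := by
  have h := MulChar.ofUnitHom_coe ((MonoidHom.toHomUnits
    { toFun := fun g => φ (Additive.ofMul g)
      map_one' := φ.map_zero_eq_one
      map_mul' := fun _ _ => φ.map_add_eq_mul _ _ : RingClassGroup k →* ℂ }).comp (ringClass k)) u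
  rw [hu] at h
  exact h

theorem ringClassCharacter_of_not_odd (hk : 1 ≤ k) {x : ℤ√(-2)} (hx : ¬ Odd x.re) :
    ringClassCharacter k φ x = 0 :=
  MulChar.map_nonunit (MulChar.ofUnitHom _) (mt (isUnit_reduction_iff hk x).1 hx)

theorem exists_unit_eq_reduction (hk : 1 ≤ k) {x : ℤ√(-2)} (hx : Odd x.re) :
    ∃ u : (ResidueRing k)ˣ, u = reduction k x :=
  (isUnit_reduction_iff hk x).2 hx

theorem norm_ringClassCharacter (hk : 1 ≤ k) {x : ℤ√(-2)} (hx : Odd x.re) :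
    ‖ringClassCharacter k φ x‖ = 1 := by
  obtain ⟨u, hu⟩ := exists_unit_eq_reduction hk hx
  rw [ringClassCharacter_apply φ hu]
  exact φ.norm_apply _

theorem norm_ringClassCharacter_le (hk : 1 ≤ k) (x : ℤ√(-2)) : ‖ringClassCharacter k φ x‖ ≤ 1 := by
  by_cases hx : Odd x.re
  · exact (norm_ringClassCharacter φ hk hx).le
  · rw [ringClassCharacter_of_not_odd φ hk hx, norm_zero]
    exact zero_le_one

theorem ringClassCharacter_zero (hk : 1 ≤ k) (x : ℤ√(-2)) :
    ringClassCharacter k 0 x = if Odd x.re then 1 else 0 := by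
  split_ifs with hx
  · obtain ⟨u, hu⟩ := exists_unit_eq_reduction hk hx
    rw [ringClassCharacter_apply _ hu]
    rfl
  · exact ringClassCharacter_of_not_odd _ hk hx

theorem ringClassCharacter_add_self (hk : 1 ≤ k) (x : ℤ√(-2)) :
    ringClassCharacter k (φ + φ) x = ringClassCharacter k φ x ^ 2 := by
  by_cases hx : Odd x.re
  · obtain ⟨u, hu⟩ := exists_unit_eq_reduction hk hx
    rw [ringClassCharacter_apply _ hu, ringClassCharacter_apply _ hu, sq, AddChar.add_apply]
  · rw [ringClassCharacter_of_not_odd _ hk hx, ringClassCharacter_of_not_odd _ hk hx,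
      zero_pow two_ne_zero]

theorem sum_ringClassCharacter (hk : 1 ≤ k) {x : ℤ√(-2)} (hx : Odd x.re) :
    ∑ φ, ringClassCharacter k φ x = if (2 ^ k : ℤ) ∣ x.im then 2 ^ k else 0 := by
  classical
  obtain ⟨u, hu⟩ := exists_unit_eq_reduction hk hx
  have h := AddChar.sum_apply_eq_ite (Additive.ofMul (ringClass k u))
  have hcard : Fintype.card (Additive (RingClassGroup k)) = 2 ^ k := by
    rw [← Nat.card_eq_fintype_card]
    exact card_ringClassGroup hk
  simp only [ringClassCharacter_apply _ hu]
  rw [h, hcard, Nat.cast_pow, Nat.cast_ofNat]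
  refine if_congr ?_ rfl rfl
  rw [ofMul_eq_zero, ← (ringClass k).map_one, eq_comm, ringClass_eq_iff]
  have h2 : (2 ^ k : ℤ) ∣ x.im ↔ (x.im : ZMod (2 ^ k)) = 0 := by
    rw [ZMod.intCast_zmod_eq_zero_iff_dvd]
    norm_num
  rw [h2, hu]
  simp only [Units.val_one, one_mul, QuadraticAlgebra.algebraMap_eq, reduction,
    QuadraticAlgebra.ext_iff, RingHom.coe_mk, MonoidHom.coe_mk, OneHom.coe_mk]
  refine ⟨fun ⟨c, hc⟩ => hc.2, fun h0 => ?_⟩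
  have h3 := u.isUnit
  rw [hu, QuadraticAlgebra.isUnit_iff_norm_isUnit, QuadraticAlgebra.norm_def] at h3
  simp only [reduction, RingHom.coe_mk, MonoidHom.coe_mk, OneHom.coe_mk, h0,
    mul_zero, add_zero, sub_zero] at h3
  exact ⟨(isUnit_of_mul_isUnit_left h3).unit, rfl, h0⟩

theorem _root_.ZMod.sum_range_intCast_add {M : ℕ} [NeZero M] {E : Type*} [AddCommMonoid E]
    (f : ZMod M → E) (x : ℤ) : ∑ a ∈ Finset.range M, f ((x + a : ℤ) : ZMod M) = ∑ z, f z := by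
  rw [← Equiv.sum_comp (Equiv.addLeft (x : ZMod M)) f]
  refine Finset.sum_bij' (fun a _ => (a : ZMod M)) (fun z _ => z.val) (fun _ _ => Finset.mem_univ _)
    (fun z _ => Finset.mem_range.2 z.val_lt)
    (fun a ha => ZMod.val_cast_of_lt (Finset.mem_range.1 ha)) (fun z _ => ZMod.natCast_zmod_val z)
    fun a _ => ?_
  simp

theorem sum_ringClassCharacter_eq_zero (hφ : φ ≠ 0) (x y : ℤ) :
    ∑ a ∈ Finset.range (2 ^ k), ∑ b ∈ Finset.range (2 ^ k),
      ringClassCharacter k φ ⟨x + a, y + b⟩ = 0 := by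
  have : Fintype (ResidueRing k) := Fintype.ofFinite _
  set χ : MulChar (ResidueRing k) ℂ := MulChar.ofUnitHom ((MonoidHom.toHomUnits
    { toFun := fun g => φ (Additive.ofMul g)
      map_one' := φ.map_zero_eq_one
      map_mul' := fun _ _ => φ.map_add_eq_mul _ _ : RingClassGroup k →* ℂ }).comp (ringClass k))
    with hχ
  have h1 : ∀ a b : ℤ, ringClassCharacter k φ ⟨a, b⟩ = χ ⟨a, b⟩ := fun a b => rfl
  have h2 : χ ≠ 1 := by
    intro h
    refine hφ (DFunLike.ext _ _ fun g => ?_)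
    obtain ⟨u, hu⟩ := QuotientGroup.mk_surjective g.toMul
    have h3 : χ u = φ g := by
      rw [hχ, MulChar.ofUnitHom_coe]
      exact congrArg φ hu
    rw [← h3, h, MulChar.one_apply_coe, AddChar.zero_apply]
  have h4 := MulChar.sum_eq_zero_of_ne_one h2
  rw [← (QuadraticAlgebra.equivProd (-2 : ZMod (2 ^ k)) 0).symm.sum_comp,
    Fintype.sum_prod_type] at h4
  simp only [h1]
  rw [← h4, ← ZMod.sum_range_intCast_add _ x]
  refine Finset.sum_congr rfl fun a _ => ?_
  rw [← ZMod.sum_range_intCast_add _ y]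
  rfl

theorem ringClassCharacter_of_even (hk : 1 ≤ k) (hφ : φ + φ = 0) {x : ℤ√(-2)} (hx : Odd x.re)
    (hy : Even x.im) : ringClassCharacter k φ x = 1 := by
  have hunit : ∀ a : ZMod (2 ^ k), IsUnit (1 + 2 * a) := fun a => by
    obtain ⟨m, rfl⟩ := ZMod.intCast_surjective a
    have h : (1 + 2 * (m : ZMod (2 ^ k))) = ((1 + 2 * m : ℤ) : ZMod (2 ^ k)) := by push_cast; rfl
    rw [h, ZMod.coe_int_isUnit_iff_isCoprime, Nat.cast_pow, IsCoprime.pow_left_iff hk,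
      Nat.cast_ofNat, Int.isCoprime_two_left]
    exact odd_one.add_even (even_two_mul m)
  have hX : IsUnit (x.re : ZMod (2 ^ k)) := by
    rw [ZMod.coe_int_isUnit_iff_isCoprime, Nat.cast_pow, IsCoprime.pow_left_iff hk,
      Nat.cast_ofNat, Int.isCoprime_two_left]
    exact hx
  have hd : ∀ s : ZMod (2 ^ k), IsUnit (1 - 2 * s ^ 2) := fun s => by
    simpa [sub_eq_add_neg] using hunit (-s ^ 2)
  have hinj : Function.Injective fun s : ZMod (2 ^ k) => s * ↑(hd s).unit⁻¹ := by
    intro s t hst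
    simp only [Units.mul_inv_eq_iff_eq_mul] at hst
    have h1 : (1 + 2 * (s * t)) * (s - t) = 0 := by
      have h2 : s * (1 - 2 * t ^ 2) = t * (1 - 2 * s ^ 2) := by
        have h3 := congrArg (· * (1 - 2 * t ^ 2)) hst
        simp only [IsUnit.unit_spec] at h3
        rw [h3, mul_right_comm, mul_assoc t, IsUnit.val_inv_mul, mul_one]
      linear_combination h2
    exact sub_eq_zero.1 ((hunit _).mul_right_eq_zero.1 h1)
  obtain ⟨v, hv⟩ := hy
  obtain ⟨s, hs⟩ := (Finite.injective_iff_surjective.1 hinj) (v * ↑hX.unit⁻¹)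
  replace hs : s * ↑(hd s).unit⁻¹ = v * ↑hX.unit⁻¹ := hs
  have hs' : s * (hX.unit * (hd s).unit⁻¹ : (ZMod (2 ^ k))ˣ) = v := by
    rw [Units.val_mul, mul_left_comm, hs, mul_left_comm, Units.mul_inv, mul_one]
  have h2 : (1 - 2 * s ^ 2) * (hX.unit * (hd s).unit⁻¹ : (ZMod (2 ^ k))ˣ) = x.re := by
    rw [Units.val_mul, mul_left_comm, IsUnit.mul_val_inv, mul_one, IsUnit.unit_spec]
  obtain ⟨u, hu⟩ := exists_unit_eq_reduction hk hx
  obtain ⟨m, rfl⟩ := ZMod.intCast_surjective s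
  obtain ⟨w, hw⟩ := exists_unit_eq_reduction (x := ⟨1, m⟩) hk odd_one
  have h3 : ringClass k (w ^ 2) = ringClass k u := by
    refine ringClass_eq_iff.2 ⟨hX.unit * (hd m).unit⁻¹, ?_⟩
    rw [Units.val_pow_eq_pow_val, hu, hw, sq]
    refine QuadraticAlgebra.ext ?_ ?_
    · simp only [reduction, RingHom.coe_mk, MonoidHom.coe_mk, OneHom.coe_mk,
        QuadraticAlgebra.algebraMap_eq, QuadraticAlgebra.re_mul, QuadraticAlgebra.im_mul]
      push_cast at h2 ⊢
      linear_combination -h2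
    · simp only [reduction, RingHom.coe_mk, MonoidHom.coe_mk, OneHom.coe_mk,
        QuadraticAlgebra.algebraMap_eq, QuadraticAlgebra.re_mul, QuadraticAlgebra.im_mul]
      rw [hv]
      push_cast at hs' ⊢
      linear_combination -2 * hs'
  rw [ringClassCharacter_apply _ hu, ← h3, sq, map_mul, ofMul_mul, AddChar.map_add_eq_mul,
    ← AddChar.add_apply, hφ, AddChar.zero_apply]

theorem exists_ringClassCharacter_eq (hk : 1 ≤ k) (hφ : φ + φ = 0) :
    ∃ ε : ℂ, ∀ x : ℤ√(-2), Odd x.re → ringClassCharacter k φ x = if Even x.im then 1 else ε := by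
  refine ⟨ringClassCharacter k φ ⟨1, 1⟩, fun x hx => ?_⟩
  split_ifs with hy
  · exact ringClassCharacter_of_even φ hk hφ hx hy
  have h1 := ringClassCharacter_add_self φ hk ⟨1, 1⟩
  rw [hφ, ringClassCharacter_zero hk, if_pos odd_one] at h1
  have h2 := ringClassCharacter_of_even φ hk hφ (x := x * ⟨1, 1⟩)
    (by
      rw [Zsqrtd.re_mul]
      simp only [mul_one, neg_mul]
      exact hx.add_even (even_two_mul _).neg)
    (by
      rw [Zsqrtd.im_mul]
      simp only [mul_one]
      exact hx.add_odd (Int.not_even_iff_odd.1 hy))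
  rw [map_mul] at h2
  calc ringClassCharacter k φ x = ringClassCharacter k φ x * ringClassCharacter k φ ⟨1, 1⟩ ^ 2 := by
        rw [← h1, mul_one]
    _ = _ := by rw [sq, ← mul_assoc, h2, one_mul]

end ZsqrtdNegTwo

end RingClassCharacters

section HeckeSeries

/-- A Dirichlet series whose coefficients have partial sums of size `O(nʳ)` extends
holomorphically to `r < re s`. -/
theorem LSeries.exists_differentiableOn_of_sum_isBigO {f : ℕ → ℂ} {r : ℝ} (hr : 0 ≤ r)
    (hO : (fun n : ℕ => ∑ k ∈ Finset.Icc 1 n, f k) =O[atTop] fun n => (n : ℝ) ^ r) :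
    ∃ H : ℂ → ℂ, DifferentiableOn ℂ H {s | r < s.re} ∧
      ∀ s, r < s.re → LSeriesSummable f s → LSeries f s = H s := by
  set S : ℝ → ℂ := fun t => ∑ k ∈ Finset.Icc 1 ⌊t⌋₊, f k with hS
  have hS0 : ∀ t < 1, S t = 0 := fun t ht => by
    simp [hS, Nat.floor_eq_zero.2 ht]
  have hloc : MeasureTheory.LocallyIntegrableOn S (Set.Ioi 0) := by
    have h := locallyIntegrableOn_mul_sum_Icc f (m := 1) (a := (0 : ℝ)) (g := fun _ => (1 : ℂ))
      le_rfl
      ((MeasureTheory.locallyIntegrable_const (1 : ℂ)).locallyIntegrableOn (Set.Ici 0))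
    simp only [one_mul] at h
    exact h.mono_set Set.Ioi_subset_Ici_self
  have htop : S =O[atTop] fun t : ℝ => t ^ (- -r) := by
    refine (hO.comp_tendsto tendsto_nat_floor_atTop).trans ?_
    refine Asymptotics.IsBigO.of_bound 1 ?_
    filter_upwards [eventually_ge_atTop 0] with t ht
    rw [one_mul, neg_neg, Function.comp_apply, Real.norm_of_nonneg (by positivity),
      Real.norm_of_nonneg (by positivity)]
    exact Real.rpow_le_rpow (Nat.cast_nonneg _) (Nat.floor_le ht) hr
  have hbot : ∀ b : ℝ, S =O[nhdsWithin 0 (Set.Ioi 0)] fun t : ℝ => t ^ (-b) := by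
    intro b
    refine Asymptotics.IsBigO.of_bound 0 ?_
    filter_upwards [mem_nhdsWithin_of_mem_nhds (Iio_mem_nhds zero_lt_one)] with t ht
    rw [hS0 t ht, norm_zero, zero_mul]
  refine ⟨fun s => s * mellin S (-s), ?_, ?_⟩
  · intro s hs
    have h := mellin_differentiableAt_of_isBigO_rpow (s := -s) hloc htop
      (by rw [Complex.neg_re]; exact neg_lt_neg hs) (hbot ((-s).re - 1)) (by linarith)
    exact (differentiableAt_id.mul (h.comp s differentiableAt_id.neg)).differentiableWithinAt
  · intro s hs hsum
    rw [LSeries_eq_mul_integral f hr hs hsum hO]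
    unfold mellin
    rw [← MeasureTheory.integral_Ici_eq_integral_Ioi]
    congr 1
    rw [MeasureTheory.setIntegral_eq_of_subset_of_forall_sdiff_eq_zero measurableSet_Ioi
      (Set.Ici_subset_Ioi.2 zero_lt_one)]
    · refine MeasureTheory.setIntegral_congr_fun measurableSet_Ici fun t _ => ?_
      rw [smul_eq_mul, mul_comm, neg_add']
    · intro t ht
      rw [hS0 t (by simpa using ht.2), smul_zero]

namespace ZsqrtdNegTwo

variable {ψ : ℤ√(-2) →* ℂ}

theorem sum_norm_normSum_isBigO (h0 : ψ 0 = 0) (hψ : ∀ x, ‖ψ x‖ ≤ 1) :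
    (fun n : ℕ => ∑ k ∈ Finset.Icc 1 n, ‖normSum ψ k‖) =O[atTop] fun n => (n : ℝ) ^ (1 : ℝ) := by
  refine Asymptotics.IsBigO.of_bound 9 ?_
  filter_upwards [eventually_ge_atTop 1] with n hn
  have h1 : ∑ k ∈ Finset.Icc 1 n, ‖normSum ψ k‖ ≤ (ellipsePoints n).card := by
    calc _ ≤ ∑ k ∈ Finset.Icc 1 n, ∑ x ∈ normFinset k, ‖ψ x‖ :=
          Finset.sum_le_sum fun k _ => norm_sum_le _ _
      _ = ∑ p ∈ ellipsePoints n, ‖ψ ⟨p.1, p.2⟩‖ :=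
          sum_normFinset_eq_sum_ellipsePoints (by rw [h0, norm_zero]) n
      _ ≤ ∑ p ∈ ellipsePoints n, 1 := Finset.sum_le_sum fun p _ => hψ _
      _ = _ := by simp
  rw [Real.rpow_one, Real.norm_of_nonneg (Nat.cast_nonneg n),
    Real.norm_of_nonneg (Finset.sum_nonneg fun _ _ => _root_.norm_nonneg _)]
  refine (h1.trans (card_ellipsePoints_le n)).trans ?_
  have h2 : (1 : ℝ) ≤ n := by exact_mod_cast hn
  have h3 := Real.sq_sqrt (Nat.cast_nonneg (α := ℝ) n)
  have h4 := Real.one_le_sqrt.2 h2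
  nlinarith

theorem LSeriesSummable_normSum (h0 : ψ 0 = 0) (hψ : ∀ x, ‖ψ x‖ ≤ 1) {s : ℂ} (hs : 1 < s.re) :
    LSeriesSummable (normSum ψ) s :=
  LSeriesSummable_of_sum_norm_bigO (sum_norm_normSum_isBigO h0 hψ) zero_le_one hs

theorem LSeriesSummable_primePowSum (hψ : ∀ x, ‖ψ x‖ ≤ 1) {s : ℂ} (hs : 1 < s.re) :
    LSeriesSummable (primePowSum ψ) s := by
  have h := (ArithmeticFunction.LSeriesSummable_vonMangoldt hs).norm.mul_left 8
  refine Summable.of_norm_bounded h fun n => ?_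
  rw [LSeries.norm_term_eq, LSeries.norm_term_eq]
  split_ifs
  · simp
  · rw [← mul_div_assoc]
    refine div_le_div_of_nonneg_right ((norm_primePowSum_le hψ n).trans_eq ?_) (by positivity)
    rw [Complex.norm_of_nonneg ArithmeticFunction.vonMangoldt_nonneg]

theorem LSeries_primePowSum_mul_normSum (h0 : ψ 0 = 0) (hψ : ∀ x, ‖ψ x‖ ≤ 1) {s : ℂ}
    (hs : 1 < s.re) :
    LSeries (primePowSum ψ) s * LSeries (normSum ψ) s = -2 * deriv (LSeries (normSum ψ)) s := by
  have habs : LSeries.abscissaOfAbsConv (normSum ψ) < s.re := by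
    refine lt_of_le_of_lt (LSeries.abscissaOfAbsConv_le_of_forall_lt_LSeriesSummable (x := 1)
      fun y hy => LSeriesSummable_normSum h0 hψ (by simpa using hy)) (by exact_mod_cast hs)
  rw [LSeries_deriv habs, ← LSeries_convolution' (LSeriesSummable_primePowSum hψ hs)
    (LSeriesSummable_normSum h0 hψ hs), neg_mul_neg,
    ← LSeries_smul (LSeries.logMul (normSum ψ)) (2 : ℂ) s]
  refine LSeries_congr (fun {n} hn => ?_) s
  rw [LSeries.convolution_def]
  refine (sum_primePowSum_mul_normSum ψ hn).trans ?_
  simp [LSeries.logMul, mul_assoc]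

theorem exists_extension_normSum {M : ℕ} (hM : 0 < M) (h0 : ψ 0 = 0) (hψ : ∀ x, ‖ψ x‖ ≤ 1)
    (hsum : ∀ x y : ℤ, ∑ a ∈ Finset.range M, ∑ b ∈ Finset.range M, ψ ⟨x + a, y + b⟩ = 0) :
    ∃ H : ℂ → ℂ, DifferentiableOn ℂ H {s | 1 / 2 < s.re} ∧
      ∀ s : ℂ, 1 < s.re → LSeries (normSum ψ) s = H s := by
  obtain ⟨H, h1, h2⟩ := LSeries.exists_differentiableOn_of_sum_isBigO (f := normSum ψ)
    (r := 1 / 2) (by norm_num) (by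
      refine Asymptotics.IsBigO.of_bound (2 * M * 6) ?_
      filter_upwards [eventually_ge_atTop 1] with n hn
      have h := norm_sum_ellipsePoints_le (f := fun x y => ψ ⟨x, y⟩) (fun x y => hψ _) hM hsum n
      rw [← sum_normFinset_eq_sum_ellipsePoints (f := ψ) h0] at h
      refine h.trans ?_
      rw [← Real.sqrt_eq_rpow, Real.norm_of_nonneg (Real.sqrt_nonneg _)]
      have h4 := Real.one_le_sqrt.2 (by exact_mod_cast hn : (1 : ℝ) ≤ n)
      calc _ ≤ (2 * M : ℝ) * (6 * √n) :=
            mul_le_mul_of_nonneg_left (by linarith) (by positivity)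
        _ = _ := (mul_assoc _ _ _).symm)
  exact ⟨H, h1, fun s hs => h2 s (by linarith) (LSeriesSummable_normSum h0 hψ hs)⟩

end ZsqrtdNegTwo

end HeckeSeries

section NonVanishing

/-- The logarithmic derivative of a holomorphic function has residue the order of vanishing. -/
theorem AnalyticAt.exists_tendsto_sub_mul_logDeriv {f : ℂ → ℂ} {z₀ : ℂ} (hf : AnalyticAt ℂ f z₀)
    (hne : ¬ ∀ᶠ z in nhds z₀, f z = 0) :
    ∃ m : ℕ, (m = 0 → f z₀ ≠ 0) ∧
      Tendsto (fun z => (z - z₀) * logDeriv f z) (nhdsWithin z₀ {z₀}ᶜ) (nhds m) := by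
  obtain ⟨m, g, hg, hg0, hfg⟩ := hf.exists_eventuallyEq_pow_smul_nonzero_iff.2 hne
  replace hfg : f =ᶠ[nhds z₀] fun z => (z - z₀) ^ m • g z := hfg
  refine ⟨m, ?_, ?_⟩
  · rintro rfl
    rw [hfg.eq_of_nhds]
    simpa using hg0
  · have h1 : ∀ᶠ z in nhds z₀, logDeriv f z = logDeriv (fun z => (z - z₀) ^ m • g z) z :=
      hfg.eventuallyEq_nhds.mono fun z hz => by
        rw [logDeriv_apply, logDeriv_apply, hz.deriv_eq, hz.eq_of_nhds]
    have h2 : Tendsto (fun z => m + (z - z₀) * logDeriv g z) (nhdsWithin z₀ {z₀}ᶜ) (nhds m) := by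
      have h3 : ContinuousAt (fun z => m + (z - z₀) * logDeriv g z) z₀ :=
        continuousAt_const.add ((continuousAt_id.sub continuousAt_const).mul
          (hg.deriv.continuousAt.div hg.continuousAt hg0))
      have h4 := h3.tendsto.mono_left (nhdsWithin_le_nhds (s := {z₀}ᶜ))
      simpa using h4
    refine h2.congr' ?_
    filter_upwards [nhdsWithin_le_nhds h1, nhdsWithin_le_nhds hg.eventually_analyticAt,
      nhdsWithin_le_nhds (hg.continuousAt.eventually_ne hg0), self_mem_nhdsWithin]
      with z h1 h2 h3 h4
    have h5 : z - z₀ ≠ 0 := sub_ne_zero.2 h4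
    rw [h1]
    simp only [smul_eq_mul]
    rw [logDeriv_mul (f := fun z => (z - z₀) ^ m) z (pow_ne_zero _ h5) h3 (by fun_prop)
      h2.differentiableAt,
      logDeriv_fun_pow (by fun_prop)]
    rw [logDeriv_apply (fun z => z - z₀), deriv_sub_const, deriv_id'']
    field_simp

namespace ZsqrtdNegTwo

variable {ψ : ℤ√(-2) →* ℂ} {H : ℂ → ℂ}

theorem normSum_one (hneg : ψ (-1) = 1) : normSum ψ 1 = 2 := by
  have h : normFinset 1 = {1, -1} := by
    ext x
    rw [mem_normFinset, Finset.mem_insert, Finset.mem_singleton]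
    constructor
    · intro hx
      have h1 := coe_normNat x
      rw [hx, Nat.cast_one] at h1
      have h2 : x.im = 0 := by nlinarith [sq_nonneg x.re, sq_nonneg x.im]
      rw [h2] at h1
      have h3 : x.re ^ 2 = 1 := by linarith
      rcases sq_eq_sq_iff_eq_or_eq_neg.1 (h3.trans (one_pow 2).symm) with h3 | h3
      · exact .inl (Zsqrtd.ext (by simpa using h3) (by simpa using h2))
      · exact .inr (Zsqrtd.ext (by simpa using h3) (by simpa using h2))
    · rintro (rfl | rfl) <;> rfl
  rw [normSum, h, Finset.sum_pair (by decide), map_one, hneg]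
  norm_num

theorem not_eventually_extension_eq_zero (h0 : ψ 0 = 0) (hψ : ∀ x, ‖ψ x‖ ≤ 1) (hneg : ψ (-1) = 1)
    (hH : DifferentiableOn ℂ H {s | 1 / 2 < s.re})
    (hHL : ∀ s : ℂ, 1 < s.re → LSeries (normSum ψ) s = H s) {ρ : ℂ} (hρ : 1 ≤ ρ.re) :
    ¬ ∀ᶠ z in nhds ρ, H z = 0 := by
  intro h
  have hopen : IsOpen {s : ℂ | 1 / 2 < s.re} := isOpen_lt continuous_const Complex.continuous_re
  have h1 := (hH.analyticOnNhd hopen).eqOn_zero_of_preconnected_of_eventuallyEq_zero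
    (convex_halfSpace_re_gt (1 / 2)).isPreconnected (by
      change 1 / 2 < ρ.re
      linarith) h
  have h2 : (fun x : ℝ => LSeries (normSum ψ) x) =ᶠ[atTop] 0 := by
    filter_upwards [eventually_gt_atTop 1] with x hx
    rw [hHL x (by simpa using hx)]
    refine h1 ?_
    change 1 / 2 < (x : ℂ).re
    rw [Complex.ofReal_re]
    linarith
  rcases LSeries_eventually_eq_zero_iff'.1 h2 with h3 | h3
  · have := h3 1 one_ne_zero
    rw [normSum_one hneg] at this
    norm_num at this
  · have h4 := (LSeriesSummable_normSum h0 hψ (s := 2) (by norm_num)).abscissaOfAbsConv_le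
    rw [h3] at h4
    exact absurd h4 (by simp)

theorem exists_tendsto_sub_mul_LSeries_primePowSum (h0 : ψ 0 = 0) (hψ : ∀ x, ‖ψ x‖ ≤ 1)
    (hneg : ψ (-1) = 1) (hH : DifferentiableOn ℂ H {s | 1 / 2 < s.re})
    (hHL : ∀ s : ℂ, 1 < s.re → LSeries (normSum ψ) s = H s) {ρ : ℂ} (hρ : 1 ≤ ρ.re) :
    ∃ m : ℕ, (m = 0 → H ρ ≠ 0) ∧
      Tendsto (fun z => (z - ρ) * LSeries (primePowSum ψ) z)
        (nhdsWithin ρ ({ρ}ᶜ ∩ {s | 1 < s.re})) (nhds (-2 * m)) := by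
  have hopen : IsOpen {s : ℂ | 1 / 2 < s.re} := isOpen_lt continuous_const Complex.continuous_re
  have hopen' : IsOpen {s : ℂ | 1 < s.re} := isOpen_lt continuous_const Complex.continuous_re
  have hana : AnalyticAt ℂ H ρ := hH.analyticAt (hopen.mem_nhds (by
      change 1 / 2 < ρ.re
      linarith))
  have hne := not_eventually_extension_eq_zero h0 hψ hneg hH hHL hρ
  obtain ⟨m, h1, h2⟩ := hana.exists_tendsto_sub_mul_logDeriv hne
  refine ⟨m, h1, ?_⟩
  refine ((h2.mono_left (nhdsWithin_mono _ Set.inter_subset_left)).const_mul (-2)).congr' ?_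
  have h3 : ∀ᶠ z in nhdsWithin ρ {ρ}ᶜ, H z ≠ 0 :=
    hana.eventually_eq_zero_or_eventually_ne_zero.resolve_left hne
  filter_upwards [nhdsWithin_mono _ Set.inter_subset_left h3, self_mem_nhdsWithin] with z h3 hz
  have h4 := LSeries_primePowSum_mul_normSum h0 hψ hz.2
  have h5 : LSeries (normSum ψ) =ᶠ[nhds z] H := by
    filter_upwards [hopen'.mem_nhds hz.2] with w hw
    exact hHL w hw
  rw [h5.deriv_eq, h5.eq_of_nhds] at h4
  rw [logDeriv_apply, mul_left_comm, ← mul_div_assoc, ← h4, mul_div_cancel_right₀ _ h3]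

theorem exists_tendsto_LSeries_primePowSum_line (h0 : ψ 0 = 0) (hψ : ∀ x, ‖ψ x‖ ≤ 1)
    (hneg : ψ (-1) = 1) (hH : DifferentiableOn ℂ H {s | 1 / 2 < s.re})
    (hHL : ∀ s : ℂ, 1 < s.re → LSeries (normSum ψ) s = H s) (t : ℝ) :
    ∃ m : ℕ, (m = 0 → H (1 + t * Complex.I) ≠ 0) ∧
      Tendsto (fun σ : ℝ => (σ - 1) * LSeries (primePowSum ψ) (σ + t * Complex.I))
        (nhdsWithin 1 (Set.Ioi 1)) (nhds (-2 * m)) := by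
  obtain ⟨m, h1, h2⟩ := exists_tendsto_sub_mul_LSeries_primePowSum h0 hψ hneg hH hHL
    (ρ := 1 + t * Complex.I) (by simp)
  refine ⟨m, h1, ?_⟩
  have h3 : Tendsto (fun σ : ℝ => (σ + t * Complex.I : ℂ)) (nhdsWithin 1 (Set.Ioi 1))
      (nhdsWithin (1 + t * Complex.I) ({1 + t * Complex.I}ᶜ ∩ {s | 1 < s.re})) := by
    refine tendsto_nhdsWithin_iff.2 ⟨?_, ?_⟩
    · have : Continuous (fun σ : ℝ => (σ + t * Complex.I : ℂ)) := by fun_prop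
      exact (this.tendsto' 1 _ (by simp)).mono_left nhdsWithin_le_nhds
    · filter_upwards [self_mem_nhdsWithin] with σ hσ
      have h4 : 1 < (σ + t * Complex.I : ℂ).re := by simpa using hσ
      refine ⟨fun h => ?_, h4⟩
      rw [h] at h4
      simp at h4
  refine (h2.comp h3).congr fun σ => ?_
  simp

theorem re_LSeries_primePowSum_nonneg {ψ₀ ψ₂ : ℤ√(-2) →* ℂ}
    (h : ∀ x, (ψ₀ x = 0 ∧ ψ x = 0) ∨ (ψ₀ x = 1 ∧ ‖ψ x‖ = 1)) (h₂ : ∀ x, ψ₂ x = ψ x ^ 2)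
    {σ : ℝ} (hσ : 1 < σ) (t : ℝ) :
    0 ≤ (3 * LSeries (primePowSum ψ₀) σ + 4 * LSeries (primePowSum ψ) (σ + t * Complex.I) +
      LSeries (primePowSum ψ₂) (σ + (2 * t : ℝ) * Complex.I)).re := by
  have hb : ∀ x, ‖ψ x‖ ≤ 1 := fun x => by
    rcases h x with h | h
    · rw [h.2, norm_zero]
      exact zero_le_one
    · exact h.2.le
  have hb₀ : ∀ x, ‖ψ₀ x‖ ≤ 1 := fun x => by
    rcases h x with h | h
    · rw [h.1, norm_zero]
      exact zero_le_one
    · rw [h.1, norm_one]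
  have hb₂ : ∀ x, ‖ψ₂ x‖ ≤ 1 := fun x => by
    rw [h₂, norm_pow]
    exact pow_le_one₀ (_root_.norm_nonneg _) (hb x)
  have s0 := (LSeriesSummable_primePowSum hb₀ (s := σ) (by simpa using hσ)).hasSum
  have s1 := (LSeriesSummable_primePowSum hb (s := σ + t * Complex.I) (by simpa using hσ)).hasSum
  have s2 := (LSeriesSummable_primePowSum hb₂ (s := σ + (2 * t : ℝ) * Complex.I)
    (by simpa using hσ)).hasSum
  have s := Complex.hasSum_re (((s0.mul_left 3).add (s1.mul_left 4)).add s2)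
  refine s.nonneg fun n => ?_
  rcases eq_or_ne n 0 with rfl | hn
  · simp
  have hn' : (n : ℂ) ≠ 0 := Nat.cast_ne_zero.2 hn
  rw [LSeries.term_of_ne_zero hn, LSeries.term_of_ne_zero hn, LSeries.term_of_ne_zero hn,
    Complex.cpow_add _ _ hn', Complex.cpow_add _ _ hn']
  set w : ℂ := ((n : ℂ) ^ (t * Complex.I))⁻¹ with hw
  have hw1 : ‖w‖ = 1 := by
    rw [hw, norm_inv, Complex.norm_natCast_cpow_of_pos (Nat.pos_of_ne_zero hn)]
    simp
  have hw2 : ((n : ℂ) ^ (((2 * t : ℝ) : ℂ) * Complex.I))⁻¹ = w ^ 2 := by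
    rw [hw, inv_pow, ← Complex.cpow_nat_mul]
    push_cast
    ring_nf
  have hσn : (n : ℂ) ^ (σ : ℂ) = (((n : ℝ) ^ σ : ℝ) : ℂ) := by
    rw [Complex.ofReal_cpow (Nat.cast_nonneg n), Complex.ofReal_natCast]
  have := re_primePowSum_nonneg h h₂ n hw1
  have e : 3 * (primePowSum ψ₀ n / (n : ℂ) ^ (σ : ℂ)) +
      4 * (primePowSum ψ n / ((n : ℂ) ^ (σ : ℂ) * (n : ℂ) ^ (t * Complex.I))) +
      primePowSum ψ₂ n / ((n : ℂ) ^ (σ : ℂ) * (n : ℂ) ^ (((2 * t : ℝ) : ℂ) * Complex.I)) =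
      (((n : ℝ) ^ σ)⁻¹ : ℝ) * (3 * primePowSum ψ₀ n + 4 * (primePowSum ψ n * w) +
        primePowSum ψ₂ n * w ^ 2) := by
    rw [← hw2, hw, hσn]
    push_cast
    simp only [div_eq_mul_inv, mul_inv]
    ring
  rw [e, Complex.re_ofReal_mul]
  exact mul_nonneg (inv_nonneg.2 (by positivity)) this

theorem extension_ne_zero {ψ₀ ψ₂ : ℤ√(-2) →* ℂ} {H₂ : ℂ → ℂ}
    (h : ∀ x, (ψ₀ x = 0 ∧ ψ x = 0) ∨ (ψ₀ x = 1 ∧ ‖ψ x‖ = 1)) (h₂ : ∀ x, ψ₂ x = ψ x ^ 2)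
    (h0 : ψ 0 = 0) (hneg : ψ (-1) = 1)
    (hH : DifferentiableOn ℂ H {s | 1 / 2 < s.re})
    (hHL : ∀ s : ℂ, 1 < s.re → LSeries (normSum ψ) s = H s)
    (hH₂ : DifferentiableOn ℂ H₂ {s | 1 / 2 < s.re})
    (hHL₂ : ∀ s : ℂ, 1 < s.re → LSeries (normSum ψ₂) s = H₂ s)
    (hpole : Tendsto (fun σ : ℝ => (σ - 1) * LSeries (primePowSum ψ₀) σ)
      (nhdsWithin 1 (Set.Ioi 1)) (nhds 2)) {s : ℂ} (hs : 1 ≤ s.re) : H s ≠ 0 := by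
  have hb : ∀ x, ‖ψ x‖ ≤ 1 := fun x => by
    rcases h x with h | h
    · rw [h.2, norm_zero]
      exact zero_le_one
    · exact h.2.le
  rcases hs.lt_or_eq with hs | hs
  · obtain ⟨m, h1, h2⟩ := exists_tendsto_sub_mul_LSeries_primePowSum h0 hb hneg hH hHL hs.le
    refine h1 ?_
    have hd : ContinuousAt (LSeries (primePowSum ψ)) s := by
      refine (LSeries_hasDerivAt ?_).continuousAt
      refine lt_of_le_of_lt (LSeries.abscissaOfAbsConv_le_of_forall_lt_LSeriesSummable (x := 1)
        fun y hy => LSeriesSummable_primePowSum hb (by simpa using hy)) (by exact_mod_cast hs)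
    have h3 : ContinuousAt (fun z => (z - s) * LSeries (primePowSum ψ) z) s :=
      (continuousAt_id.sub continuousAt_const).mul hd
    have hopen : {s : ℂ | 1 < s.re} ∈ nhds s :=
      (isOpen_lt continuous_const Complex.continuous_re).mem_nhds hs
    rw [Set.inter_comm, nhdsWithin_inter_of_mem (nhdsWithin_le_nhds hopen)] at h2
    have h4 := tendsto_nhds_unique (h3.tendsto.mono_left nhdsWithin_le_nhds) h2
    simpa using h4.symm
  · have hs' : s = 1 + s.im * Complex.I := by
      rw [← Complex.re_add_im s, ← hs]
      simp
    obtain ⟨m, h1, h3⟩ := exists_tendsto_LSeries_primePowSum_line h0 hb hneg hH hHL s.im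
    obtain ⟨m', -, h4⟩ := exists_tendsto_LSeries_primePowSum_line (ψ := ψ₂) (by simp [h₂, h0])
      (fun x => by
        rw [h₂, norm_pow]
        exact pow_le_one₀ (_root_.norm_nonneg _) (hb x)) (by simp [h₂, hneg]) hH₂ hHL₂ (2 * s.im)
    rw [hs']
    refine h1 ?_
    have h5 := ((hpole.const_mul 3).add (h3.const_mul 4)).add h4
    have h6 := (Complex.continuous_re.tendsto _).comp h5
    have h7 := ge_of_tendsto (b := 0) h6 (by
      filter_upwards [self_mem_nhdsWithin] with σ hσ
      have h8 := re_LSeries_primePowSum_nonneg h h₂ hσ s.im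
      have h9 := mul_nonneg (sub_nonneg.2 (le_of_lt hσ)) h8
      rw [← Complex.re_ofReal_mul] at h9
      refine h9.trans_eq ?_
      simp only [Function.comp_apply]
      congr 1
      push_cast
      ring)
    have h8 : (0 : ℝ) ≤ 3 * 2 + 4 * (-2 * m) + -2 * m' := by
      refine h7.trans_eq ?_
      simp
    by_contra hm
    have h9 : (1 : ℝ) ≤ m := by exact_mod_cast Nat.one_le_iff_ne_zero.2 hm
    have h10 : (0 : ℝ) ≤ m' := Nat.cast_nonneg _
    linarith

theorem ringClassCharacter_neg_one {k : ℕ} (hk : 1 ≤ k)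
    (φ : AddChar (Additive (RingClassGroup k)) ℂ) : ringClassCharacter k φ (-1) = 1 := by
  obtain ⟨u, hu⟩ := exists_unit_eq_reduction hk (x := -1) (by decide)
  have h : ringClass k u = 1 := by
    rw [← map_one (ringClass k), eq_comm, ringClass_eq_iff]
    refine ⟨-1, ?_⟩
    rw [hu, map_neg, map_one]
    simp
  rw [ringClassCharacter_apply φ hu, h]
  exact φ.map_zero_eq_one

theorem exists_continuousOn_LSeries_primePowSum {k : ℕ} (hk : 1 ≤ k)
    {φ : AddChar (Additive (RingClassGroup k)) ℂ} (hφ : φ + φ ≠ 0)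
    (hpole : Tendsto (fun σ : ℝ => (σ - 1) * LSeries (primePowSum (ringClassCharacter k 0)) σ)
      (nhdsWithin 1 (Set.Ioi 1)) (nhds 2)) :
    ∃ G : ℂ → ℂ, ContinuousOn G {s | 1 ≤ s.re} ∧
      ∀ s : ℂ, 1 < s.re → LSeries (primePowSum (ringClassCharacter k φ)) s = G s := by
  have hz : ∀ φ : AddChar (Additive (RingClassGroup k)) ℂ, ringClassCharacter k φ 0 = 0 :=
    fun φ => ringClassCharacter_of_not_odd φ hk (by decide)
  have hext : ∀ φ : AddChar (Additive (RingClassGroup k)) ℂ, φ ≠ 0 → ∃ H : ℂ → ℂ,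
      DifferentiableOn ℂ H {s | 1 / 2 < s.re} ∧
        ∀ s : ℂ, 1 < s.re → LSeries (normSum (ringClassCharacter k φ)) s = H s := fun φ hφ =>
    exists_extension_normSum (M := 2 ^ k) (by positivity) (hz φ) (norm_ringClassCharacter_le φ hk)
      (sum_ringClassCharacter_eq_zero φ hφ)
  obtain ⟨H, hH, hHL⟩ := hext φ (by
    rintro rfl
    exact hφ (add_zero 0))
  obtain ⟨H₂, hH₂, hHL₂⟩ := hext (φ + φ) hφ
  have hne : ∀ s : ℂ, 1 ≤ s.re → H s ≠ 0 := fun s hs => by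
    refine extension_ne_zero (fun x => ?_) (ringClassCharacter_add_self φ hk) (hz φ)
      (ringClassCharacter_neg_one hk φ) hH hHL hH₂ hHL₂ hpole hs
    rw [ringClassCharacter_zero hk]
    split_ifs with hx
    · exact .inr ⟨rfl, norm_ringClassCharacter φ hk hx⟩
    · exact .inl ⟨rfl, ringClassCharacter_of_not_odd φ hk hx⟩
  have hopen : IsOpen {s : ℂ | 1 / 2 < s.re} := isOpen_lt continuous_const Complex.continuous_re
  have hsub : {s : ℂ | 1 ≤ s.re} ⊆ {s : ℂ | 1 / 2 < s.re} := fun s hs => by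
    change 1 ≤ s.re at hs
    change 1 / 2 < s.re
    linarith
  refine ⟨fun s => -2 * deriv H s / H s, ?_, fun s hs => ?_⟩
  · exact (continuousOn_const.mul ((hH.deriv hopen).continuousOn.mono hsub)).div
      (hH.continuousOn.mono hsub) hne
  · have h4 := LSeries_primePowSum_mul_normSum (hz φ) (norm_ringClassCharacter_le φ hk) hs
    have h5 : LSeries (normSum (ringClassCharacter k φ)) =ᶠ[nhds s] H := by
      filter_upwards [(isOpen_lt continuous_const Complex.continuous_re).mem_nhds hs] with w hw
      exact hHL w hw
    rw [h5.deriv_eq, h5.eq_of_nhds] at h4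
    rw [eq_div_iff (hne s hs.le), h4]

end ZsqrtdNegTwo

end NonVanishing

section PoleAtOne

theorem ArithmeticFunction.vonMangoldt.residueClass_zmod_one (n : ℕ) :
    residueClass (0 : ZMod 1) n = ArithmeticFunction.vonMangoldt n :=
  Set.indicator_of_mem (s := {n : ℕ | (n : ZMod 1) = 0})
    (by
      rw [Set.mem_ofPred_eq]
      exact Subsingleton.elim _ _) _

open ArithmeticFunction.vonMangoldt in
theorem summable_vonMangoldt_non_primes_div :
    Summable fun n : ℕ => (if n.Prime then 0 else ArithmeticFunction.vonMangoldt n) / n := by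
  refine (summable_residueClass_non_primes_div (0 : ZMod 1)).congr fun n => ?_
  rw [residueClass_zmod_one]

theorem continuousOn_LSeries_of_summable {d : ℕ → ℂ} (h : Summable fun n : ℕ => ‖d n‖ / n) :
    ContinuousOn (LSeries d) {s | 1 ≤ s.re} := by
  refine continuousOn_tsum (fun n => ?_) h fun n s hs => ?_
  · rcases eq_or_ne n 0 with rfl | hn
    · simpa using continuousOn_const
    · have hn' : (n : ℂ) ≠ 0 := Nat.cast_ne_zero.2 hn
      have : Continuous fun s : ℂ => d n / (n : ℂ) ^ s :=
        continuous_const.div (continuous_id.const_cpow (.inl hn')) fun s => by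
          simp [Complex.cpow_eq_zero_iff, hn']
      refine this.continuousOn.congr fun s _ => LSeries.term_of_ne_zero hn _ _
  · change 1 ≤ s.re at hs
    rcases eq_or_ne n 0 with rfl | hn
    · simp
    · have h1 := LSeries.norm_term_le_of_re_le_re d (s := 1) (s' := s) (by simpa using hs) n
      rw [LSeries.norm_term_eq d 1] at h1
      simpa [hn] using h1

/-- The Dirichlet series of `a` has at most a simple pole of residue `A` at `1` on `1 ≤ re s`, with
coefficients dominated by the von Mangoldt function. -/
structure HasPoleAtOne (a : ℕ → ℂ) (A : ℂ) : Prop where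
  bound : ∃ C : ℝ, ∀ n, ‖a n‖ ≤ C * ArithmeticFunction.vonMangoldt n
  extension : ∃ G : ℂ → ℂ, ContinuousOn G {s | 1 ≤ s.re} ∧
    ∀ s : ℂ, 1 < s.re → LSeries a s = A / (s - 1) + G s

theorem LSeriesSummable_of_norm_le_vonMangoldt {a : ℕ → ℂ} {C : ℝ}
    (h : ∀ n, ‖a n‖ ≤ C * ArithmeticFunction.vonMangoldt n) {s : ℂ} (hs : 1 < s.re) :
    LSeriesSummable a s := by
  have hΛ := (ArithmeticFunction.LSeriesSummable_vonMangoldt hs).norm.mul_left C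
  refine Summable.of_norm_bounded hΛ fun n => ?_
  rw [LSeries.norm_term_eq, LSeries.norm_term_eq]
  split_ifs
  · simp
  · rw [← mul_div_assoc]
    refine div_le_div_of_nonneg_right ((h n).trans_eq ?_) (by positivity)
    rw [Complex.norm_of_nonneg ArithmeticFunction.vonMangoldt_nonneg]

namespace HasPoleAtOne

variable {a b : ℕ → ℂ} {A B : ℂ}

theorem summable (h : HasPoleAtOne a A) {s : ℂ} (hs : 1 < s.re) : LSeriesSummable a s :=
  LSeriesSummable_of_norm_le_vonMangoldt h.bound.choose_spec hs

theorem congr_primes (h : HasPoleAtOne a A)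
    (hb : ∃ C : ℝ, ∀ n, ‖b n‖ ≤ C * ArithmeticFunction.vonMangoldt n)
    (hab : ∀ᶠ p : ℕ in atTop, p.Prime → a p = b p) : HasPoleAtOne b A := by
  obtain ⟨C, hC⟩ := h.bound
  obtain ⟨D, hD⟩ := hb
  obtain ⟨G, hG, hL⟩ := h.extension
  refine ⟨⟨D, hD⟩, fun s => G s + LSeries (b - a) s, hG.add ?_, fun s hs => ?_⟩
  · refine continuousOn_LSeries_of_summable ?_
    refine Summable.of_norm_bounded_eventually_nat
      (summable_vonMangoldt_non_primes_div.mul_left (D + C)) ?_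
    filter_upwards [hab] with n hab
    rw [← mul_div_assoc, Real.norm_of_nonneg (by positivity)]
    refine div_le_div_of_nonneg_right ?_ (Nat.cast_nonneg n)
    split_ifs with hn
    · simp [hab hn]
    · rw [add_mul]
      exact (norm_sub_le _ _).trans (add_le_add (hD n) (hC n))
  · beta_reduce
    rw [LSeries_sub (LSeriesSummable_of_norm_le_vonMangoldt hD hs) (h.summable hs), hL s hs]
    ring

theorem const_mul (h : HasPoleAtOne a A) (c : ℂ) : HasPoleAtOne (c • a) (c * A) := by
  obtain ⟨C, hC⟩ := h.bound
  obtain ⟨G, hG, hL⟩ := h.extension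
  refine ⟨⟨‖c‖ * C, fun n => ?_⟩, fun s => c * G s, continuousOn_const.mul hG, fun s hs => ?_⟩
  · rw [Pi.smul_apply, smul_eq_mul, norm_mul, mul_assoc]
    exact mul_le_mul_of_nonneg_left (hC n) (norm_nonneg c)
  · rw [LSeries_smul, hL s hs]
    ring

theorem add (h : HasPoleAtOne a A) (h' : HasPoleAtOne b B) : HasPoleAtOne (a + b) (A + B) := by
  obtain ⟨C, hC⟩ := h.bound
  obtain ⟨D, hD⟩ := h'.bound
  obtain ⟨G, hG, hL⟩ := h.extension
  obtain ⟨G', hG', hL'⟩ := h'.extension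
  refine ⟨⟨C + D, fun n => ?_⟩, fun s => G s + G' s, hG.add hG', fun s hs => ?_⟩
  · rw [add_mul]
    exact (norm_add_le _ _).trans (add_le_add (hC n) (hD n))
  · rw [LSeries_add (h.summable hs) (h'.summable hs), hL s hs, hL' s hs]
    ring

theorem sum {ι : Type*} (t : Finset ι) {a : ι → ℕ → ℂ} {A : ι → ℂ}
    (h : ∀ i ∈ t, HasPoleAtOne (a i) (A i)) : HasPoleAtOne (∑ i ∈ t, a i) (∑ i ∈ t, A i) := by
  classical
  induction t using Finset.induction_on with
  | empty => exact ⟨⟨0, fun n => by simp⟩, 0, continuousOn_const, fun s _ => by simp⟩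
  | insert i t hi ih =>
    rw [Finset.sum_insert hi, Finset.sum_insert hi]
    exact (h i (Finset.mem_insert_self i t)).add
      (ih fun j hj => h j (Finset.mem_insert_of_mem hj))

theorem tendsto (h : HasPoleAtOne a A) :
    Tendsto (fun σ : ℝ => (σ - 1) * LSeries a σ) (nhdsWithin 1 (Set.Ioi 1)) (nhds A) := by
  obtain ⟨G, hG, hL⟩ := h.extension
  have h1 : Tendsto (fun σ : ℝ => (σ : ℂ)) (nhdsWithin 1 (Set.Ioi 1))
      (nhdsWithin 1 {s | 1 ≤ s.re}) := by
    refine tendsto_nhdsWithin_iff.2 ⟨?_, ?_⟩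
    · exact (Complex.continuous_ofReal.tendsto' 1 1 Complex.ofReal_one).mono_left nhdsWithin_le_nhds
    · filter_upwards [self_mem_nhdsWithin] with σ hσ
      exact (le_of_lt hσ : (1 : ℝ) ≤ σ)
  have h2 := (hG 1 (by simp : (1 : ℝ) ≤ (1 : ℂ).re)).tendsto.comp h1
  have h3 : Tendsto (fun σ : ℝ => A + (σ - 1) * G σ) (nhdsWithin 1 (Set.Ioi 1)) (nhds A) := by
    have h4 : Tendsto (fun σ : ℝ => (σ : ℂ) - 1) (nhdsWithin 1 (Set.Ioi 1)) (nhds 0) :=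
      ((Complex.continuous_ofReal.sub continuous_const).tendsto' 1 0 (by simp)).mono_left
        nhdsWithin_le_nhds
    simpa using (h4.mul h2).const_add A
  refine h3.congr' ?_
  filter_upwards [self_mem_nhdsWithin] with σ hσ
  have h5 : (σ : ℂ) - 1 ≠ 0 := by
    rw [sub_ne_zero]
    exact_mod_cast (ne_of_gt hσ)
  rw [hL σ (by simpa using hσ), mul_add, mul_div_cancel₀ _ h5]

open ArithmeticFunction.vonMangoldt in
theorem residueClass {q : ℕ} [NeZero q] {c : ZMod q} (hc : IsUnit c) :
    HasPoleAtOne (fun n => (residueClass c n : ℂ)) (q.totient : ℂ)⁻¹ := by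
  refine ⟨⟨1, fun n => ?_⟩, LFunctionResidueClassAux c, continuousOn_LFunctionResidueClassAux c,
    fun s hs => ?_⟩
  · rw [Complex.norm_of_nonneg (residueClass_nonneg c n), one_mul]
    exact residueClass_le c n
  · rw [eqOn_LFunctionResidueClassAux hc hs]
    ring

open ArithmeticFunction.vonMangoldt in
theorem vonMangoldt : HasPoleAtOne (fun n => (ArithmeticFunction.vonMangoldt n : ℂ)) 1 := by
  have h := HasPoleAtOne.residueClass (q := 1) (c := 0) (isUnit_of_subsingleton _)
  convert h using 1
  · funext n
    rw [residueClass_zmod_one]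
  · simp

end HasPoleAtOne

end PoleAtOne

section PrimesOfTheForm

namespace ZsqrtdNegTwo

variable {k : ℕ} {φ : AddChar (Additive (RingClassGroup k)) ℂ}

theorem normSum_ringClassCharacter_apply_prime (hk : 1 ≤ k) {ε : ℂ}
    (hε : ∀ x : ℤ√(-2), Odd x.re → ringClassCharacter k φ x = if Even x.im then 1 else ε)
    {l : ℕ} (hl : l.Prime) :
    normSum (ringClassCharacter k φ) l =
      4 * ((if l % 8 = 1 then 1 else 0) + ε * (if l % 8 = 3 then 1 else 0)) := by
  rcases hl.eq_two_or_odd' with rfl | h2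
  · rw [normSum, Finset.sum_eq_zero]
    · simp
    · intro x hx
      refine ringClassCharacter_of_not_odd φ hk fun h => ?_
      rw [← re_odd_of_odd, mem_normFinset.1 hx] at h
      exact absurd h (by decide)
  by_cases h : l % 8 = 1 ∨ l % 8 = 3
  · obtain ⟨p, hp⟩ := exists_normNat_eq hl (by rintro rfl; exact absurd h2 (by decide)) h
    have hpo : Odd (normNat p) := hp ▸ h2
    have hre : Odd p.re := re_odd_of_odd.1 hpo
    have h8 := normNat_mod_eight hpo
    rw [hp] at h8
    rw [normSum, sum_normFinset_eq hl h2 hp, hε p hre, hε (-p) (by simpa using hre),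
      hε (star p) (by simpa using hre), hε (-star p) (by simpa using hre)]
    simp only [Zsqrtd.im_neg, Zsqrtd.im_star, neg_neg, even_neg]
    by_cases hi : Even p.im
    · simp [h8.1 hi, hi]
      norm_num
    · simp [h8.2 (Int.not_even_iff_odd.1 hi), hi]
      ring
  · push Not at h
    rw [normSum, Finset.sum_eq_zero]
    · simp [h.1, h.2]
    · intro x hx
      rw [mem_normFinset] at hx
      have h8 := normNat_mod_eight (x := x) (hx ▸ h2)
      rw [hx] at h8
      rcases Int.even_or_odd x.im with hi | hi
      · exact absurd (h8.1 hi) h.1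
      · exact absurd (h8.2 hi) h.2

theorem hasPoleAtOne_primePowSum_of_eq_ite (hk : 1 ≤ k) {ε : ℂ}
    (hε : ∀ x : ℤ√(-2), Odd x.re → ringClassCharacter k φ x = if Even x.im then 1 else ε) :
    HasPoleAtOne (primePowSum (ringClassCharacter k φ)) (1 + ε) := by
  have h1 := HasPoleAtOne.residueClass (q := 8) (c := 1) (by decide)
  have h3 := HasPoleAtOne.residueClass (q := 8) (c := 3) (by decide)
  have h := ((h1.add (h3.const_mul ε)).const_mul 4).congr_primes
    (b := primePowSum (ringClassCharacter k φ))
    ⟨8, norm_primePowSum_le (norm_ringClassCharacter_le φ hk)⟩ <| .of_forall fun p hp => by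
      rw [primePowSum_apply_prime _ hp, normSum_ringClassCharacter_apply_prime hk hε hp]
      have e : ∀ c : ℕ, (p : ZMod 8) = c ↔ p % 8 = c % 8 := fun c =>
        ZMod.natCast_eq_natCast_iff p c 8
      have e1 := e 1
      have e3 := e 3
      simp only [Nat.cast_one, Nat.cast_ofNat] at e1 e3
      simp only [Pi.smul_apply, Pi.add_apply, smul_eq_mul,
        ArithmeticFunction.vonMangoldt.residueClass,
        Set.indicator_apply, Set.mem_ofPred_eq, e1, e3,
        ArithmeticFunction.vonMangoldt_apply_prime hp]
      norm_num
      split_ifs <;> simp <;> ring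
  convert h using 1
  rw [show Nat.totient 8 = 4 from by decide]
  push_cast
  ring

theorem hasPoleAtOne_primePowSum_zero (hk : 1 ≤ k) :
    HasPoleAtOne (primePowSum (ringClassCharacter k 0)) 2 := by
  rw [← one_add_one_eq_two]
  refine hasPoleAtOne_primePowSum_of_eq_ite hk fun x hx => ?_
  rw [ringClassCharacter_zero hk, if_pos hx, ite_self]

theorem hasPoleAtOne_primePowSum_of_add_self_eq_zero (hk : 1 ≤ k) (hφ : φ + φ = 0) (h0 : φ ≠ 0) :
    HasPoleAtOne (primePowSum (ringClassCharacter k φ)) 0 := by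
  obtain ⟨ε, hε⟩ := exists_ringClassCharacter_eq φ hk hφ
  have h1 : ε = 1 ∨ ε = -1 := by
    have h := ringClassCharacter_add_self φ hk ⟨1, 1⟩
    rw [hφ, ringClassCharacter_zero hk, if_pos odd_one, hε _ odd_one, if_neg (by decide)] at h
    exact sq_eq_sq_iff_eq_or_eq_neg.1 (h.symm.trans (one_pow 2).symm)
  have h2 : ε ≠ 1 := by
    rintro rfl
    have h3 : ∀ x, ringClassCharacter k φ x = ((if Odd x.re then 1 else 0 : ℕ) : ℂ) := fun x => by
      split_ifs with hx
      · rw [hε x hx, ite_self, Nat.cast_one]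
      · rw [ringClassCharacter_of_not_odd φ hk hx, Nat.cast_zero]
    have h4 := sum_ringClassCharacter_eq_zero φ h0 0 0
    simp only [h3] at h4
    have h5 := (Finset.sum_eq_zero_iff.1 (Finset.sum_eq_zero_iff.1 (by exact_mod_cast h4) 1
      (Finset.mem_range.2 (Nat.one_lt_two_pow (by lia))))) 0 (Finset.mem_range.2 (by positivity))
    simp at h5
  have h := hasPoleAtOne_primePowSum_of_eq_ite hk hε
  rwa [h1.resolve_left h2, add_neg_cancel] at h

theorem hasPoleAtOne_primePowSum (hk : 1 ≤ k) (φ : AddChar (Additive (RingClassGroup k)) ℂ) :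
    HasPoleAtOne (primePowSum (ringClassCharacter k φ)) (if φ = 0 then 2 else 0) := by
  split_ifs with h0
  · exact h0 ▸ hasPoleAtOne_primePowSum_zero hk
  by_cases hφ : φ + φ = 0
  · exact hasPoleAtOne_primePowSum_of_add_self_eq_zero hk hφ h0
  obtain ⟨G, hG, hL⟩ := exists_continuousOn_LSeries_primePowSum hk hφ
    (hasPoleAtOne_primePowSum_zero hk).tendsto
  exact ⟨⟨8, norm_primePowSum_le (norm_ringClassCharacter_le φ hk)⟩, G, hG, fun s hs => by
    rw [hL s hs, zero_div, zero_add]⟩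

/-- The odd numbers of the form `a² + 2 · 4ᵏ · b²`. -/
def IsNormOfLevel (k l : ℕ) : Prop := ∃ x : ℤ√(-2), normNat x = l ∧ Odd x.re ∧ (2 ^ k : ℤ) ∣ x.im

open Classical in
theorem hasPoleAtOne_isNormOfLevel (hk : 1 ≤ k) :
    HasPoleAtOne (fun l => if l.Prime ∧ IsNormOfLevel k l then (Real.log l : ℂ) else 0)
      (1 / 2 ^ (k + 1)) := by
  have hsum := (HasPoleAtOne.sum Finset.univ fun φ _ => hasPoleAtOne_primePowSum hk φ).const_mul
    (1 / (4 * 2 ^ k))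
  rw [Finset.sum_ite_eq' Finset.univ 0, if_pos (Finset.mem_univ _)] at hsum
  have h := hsum.congr_primes
    (b := fun l => if l.Prime ∧ IsNormOfLevel k l then (Real.log l : ℂ) else 0) ⟨1, fun l => by
      rw [one_mul]
      split_ifs with hl
      · rw [Complex.norm_of_nonneg (Real.log_natCast_nonneg l),
          ArithmeticFunction.vonMangoldt_apply_prime hl.1]
      · rw [norm_zero]
        exact ArithmeticFunction.vonMangoldt_nonneg⟩ <| .of_forall fun l hl => by
    simp only [Pi.smul_apply, Finset.sum_apply, primePowSum_apply_prime _ hl, ← Finset.sum_mul]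
    simp only [normSum]
    rw [Finset.sum_comm]
    by_cases hQ : IsNormOfLevel k l
    · obtain ⟨p, hp, hre, him⟩ := hQ
      have h2 : Odd l := hp ▸ re_odd_of_odd.2 hre
      rw [sum_normFinset_eq hl h2 hp, sum_ringClassCharacter hk hre,
        sum_ringClassCharacter hk (x := -p) (by simpa using hre),
        sum_ringClassCharacter hk (x := star p) (by simpa using hre),
        sum_ringClassCharacter hk (x := -star p) (by simpa using hre)]
      rw [if_pos (c := l.Prime ∧ IsNormOfLevel k l) ⟨hl, ⟨p, hp, hre, him⟩⟩]
      simp only [Zsqrtd.im_neg, Zsqrtd.im_star, neg_neg, dvd_neg, if_pos him, smul_eq_mul]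
      have : (2 : ℂ) ^ k ≠ 0 := pow_ne_zero k two_ne_zero
      field_simp
      norm_num
    · rw [if_neg fun h => hQ h.2, Finset.sum_eq_zero, zero_mul, smul_zero]
      intro x hx
      by_cases hre : Odd x.re
      · rw [sum_ringClassCharacter hk hre, if_neg fun him => hQ ⟨x, mem_normFinset.1 hx, hre, him⟩]
      · exact Finset.sum_eq_zero fun φ _ => ringClassCharacter_of_not_odd φ hk hre
  convert h using 1
  rw [pow_succ]
  field_simp
  norm_num

end ZsqrtdNegTwo

end PrimesOfTheForm

section Density

namespace ZsqrtdNegTwo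

theorem natAbs_eq_of_normNat_eq_prime {l : ℕ} (hl : l.Prime) {x y : ℤ√(-2)} (hx : normNat x = l)
    (hy : normNat y = l) : x.re.natAbs = y.re.natAbs ∧ x.im.natAbs = y.im.natAbs := by
  have h := mem_normFinset.2 hy
  rw [normFinset_eq_of_mem hl hx] at h
  simp only [Finset.mem_insert, Finset.mem_singleton] at h
  rcases h with rfl | rfl | rfl | rfl <;> simp

theorem etaCoeff_eq_one_iff (n : ℕ) {l : ℕ} (hl : l.Prime) :
    etaCoeff (24 * (2 ^ (2 * n + 1) + 1)) l = 1 ↔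
      IsNormOfLevel n l ∧ ¬ IsNormOfLevel (n + 1) l := by
  rw [etaCoeff_eq_card _ hl.pos]
  have hnorm : ∀ a b : ℕ, (2 * a + 1) ^ 2 + 2 ^ (2 * n + 1) * (2 * b + 1) ^ 2 = l ↔
      normNat ⟨2 * a + 1, 2 ^ n * (2 * b + 1)⟩ = l := fun a b => by
    rw [← Int.natCast_inj (m := normNat _), coe_normNat, ← Int.natCast_inj]
    push_cast
    rw [show (2 : ℤ) ^ (2 * n + 1) * (2 * (b : ℤ) + 1) ^ 2 =
      2 * (2 ^ n * (2 * (b : ℤ) + 1)) ^ 2 by ring]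
  constructor
  · intro h
    obtain ⟨⟨a, b⟩, hab⟩ := Finset.card_pos.1 (Nat.pos_of_ne_zero fun h0 => by
      rw [h0] at h
      exact absurd h (by decide))
    have hx := (hnorm a b).1 (Finset.mem_filter.1 hab).2
    refine ⟨⟨_, hx, ⟨a, rfl⟩, Dvd.intro _ rfl⟩, ?_⟩
    rintro ⟨y, hy, -, him⟩
    have h2 := (natAbs_eq_of_normNat_eq_prime hl hx hy).2
    rw [← Int.dvd_natAbs, ← h2, Int.dvd_natAbs, pow_succ] at him
    have h3 := Int.dvd_of_mul_dvd_mul_left (by positivity) him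
    lia
  · rintro ⟨⟨⟨u, v⟩, hx, ⟨a, ha⟩, ⟨c, hc⟩⟩, h⟩
    simp only at ha hc
    subst ha hc
    have hodd : Odd c := by
      rw [← Int.not_even_iff_odd]
      rintro ⟨d, rfl⟩
      exact h ⟨_, hx, ⟨a, rfl⟩, ⟨d, by simp only; ring⟩⟩
    obtain ⟨d, rfl⟩ := hodd
    rw [Finset.card_eq_one.2 ⟨((2 * a + 1).natAbs / 2, (2 * d + 1).natAbs / 2), ?_⟩]
    · rfl
    ext ⟨a', b'⟩
    simp only [Finset.mem_filter, Finset.mem_product, Finset.mem_range, Finset.mem_singleton,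
      Prod.mk.injEq, hnorm]
    constructor
    · rintro ⟨-, hy⟩
      obtain ⟨h1, h2⟩ := natAbs_eq_of_normNat_eq_prime hl hx hy
      simp only [Int.natAbs_mul] at h1 h2
      have h3 := Nat.eq_of_mul_eq_mul_left (by positivity) h2
      lia
    · rintro ⟨h1, h2⟩
      have e1 : (2 * a' + 1 : ℤ) ^ 2 = (2 * a + 1) ^ 2 := by
        rw [sq_eq_sq_iff_eq_or_eq_neg]
        lia
      have e2 : (2 * b' + 1 : ℤ) ^ 2 = (2 * d + 1) ^ 2 := by
        rw [sq_eq_sq_iff_eq_or_eq_neg]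
        lia
      have hy : normNat ⟨2 * a' + 1, 2 ^ n * (2 * b' + 1)⟩ = l := by
        rw [← hx, ← Int.natCast_inj, coe_normNat, coe_normNat]
        simp only [mul_pow, e1, e2]
      have h3 := (hnorm a' b').2 hy
      have h4 : 1 ≤ 2 ^ (2 * n + 1) := Nat.one_le_two_pow
      refine ⟨⟨?_, ?_⟩, hy⟩ <;> nlinarith

end ZsqrtdNegTwo

theorem sum_filter_prime_eq_sum_Icc (S : ℕ → Prop) [DecidablePred S] (n : ℕ) :
    ∑ l ∈ (Finset.range (n + 1)).filter (fun l => l.Prime ∧ S l), Real.log l =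
      ∑ l ∈ Finset.Icc 1 n, if l.Prime ∧ S l then Real.log l else 0 := by
  rw [Finset.sum_filter]
  refine (Finset.sum_subset (fun l hl => ?_) fun l _ hl => ?_).symm
  · rw [Finset.mem_Icc] at hl
    exact Finset.mem_range.2 (by lia)
  · have h0 : l = 0 := by
      rw [Finset.mem_Icc] at hl
      simp only [Finset.mem_range] at *
      lia
    simp [h0]

theorem theta_eq_sum_range (n : ℕ) :
    Chebyshev.theta n = ∑ l ∈ (Finset.range (n + 1)).filter Nat.Prime, Real.log l := by
  rw [Chebyshev.theta_eq_sum_Icc, Nat.floor_natCast, Nat.range_succ_eq_Icc_zero]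

namespace HasPoleAtOne

theorem tendsto_sum_log_div {S : ℕ → Prop} [DecidablePred S] {A : ℝ}
    (h : HasPoleAtOne (fun l => if l.Prime ∧ S l then (Real.log l : ℂ) else 0) A) :
    Tendsto (fun n : ℕ =>
      (∑ l ∈ (Finset.range (n + 1)).filter (fun l => l.Prime ∧ S l), Real.log l) / n)
      atTop (nhds A) := by
  obtain ⟨G, hG, hL⟩ := h.extension
  simp only [sum_filter_prime_eq_sum_Icc]
  refine tendsto_sum_div_of_LSeries (M := Real.log 4) (fun l => ?_) (fun n => ?_) hG fun s hs => ?_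
  · split_ifs
    · exact Real.log_natCast_nonneg l
    · exact le_rfl
  · rw [← sum_filter_prime_eq_sum_Icc]
    refine le_trans ?_ (Chebyshev.theta_le_log4_mul_x (Nat.cast_nonneg n))
    rw [theta_eq_sum_range]
    exact Finset.sum_le_sum_of_subset_of_nonneg
      (Finset.monotone_filter_right _ fun l _ hl => hl.1) fun l _ _ => Real.log_natCast_nonneg l
  · rw [← hL s hs]
    congr 1
    funext l
    split_ifs <;> simp

end HasPoleAtOne

theorem tendsto_theta_div : Tendsto (fun n : ℕ => Chebyshev.theta n / n) atTop (nhds 1) := by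
  have h : HasPoleAtOne (fun l => if l.Prime ∧ True then (Real.log l : ℂ) else 0) (1 : ℝ) := by
    rw [Complex.ofReal_one]
    refine HasPoleAtOne.vonMangoldt.congr_primes ⟨1, fun l => ?_⟩ (.of_forall fun p hp => ?_)
    · rw [one_mul]
      split_ifs with hl
      · rw [Complex.norm_of_nonneg (Real.log_natCast_nonneg l),
          ArithmeticFunction.vonMangoldt_apply_prime hl.1]
      · rw [norm_zero]
        exact ArithmeticFunction.vonMangoldt_nonneg
    · rw [if_pos ⟨hp, trivial⟩, ArithmeticFunction.vonMangoldt_apply_prime hp]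
  refine h.tendsto_sum_log_div.congr fun n => ?_
  simp only [theta_eq_sum_range, and_true]

theorem primePi_eq_primeCounting (n : ℕ) : primePi n = Nat.primeCounting n := by
  rw [primePi, Nat.primeCounting, Nat.primeCounting', Nat.count_eq_card_filter_range]

theorem tendsto_primePi_mul_log_sub_theta_div :
    Tendsto (fun n : ℕ => (primePi n * Real.log n - Chebyshev.theta n) / n) atTop (nhds 0) := by
  have h1 := Chebyshev.primeCounting_sub_theta_div_log_isBigO.comp_tendsto
    (tendsto_natCast_atTop_atTop (R := ℝ))
  have h2 : (fun n : ℕ => (primePi n * Real.log n - Chebyshev.theta n) / n) =O[atTop]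
      fun n : ℕ => (Real.log n)⁻¹ := by
    have h3 := h1.mul (Asymptotics.isBigO_refl (fun n : ℕ => Real.log n / n) atTop)
    refine (h3.congr' ?_ ?_)
    · filter_upwards [eventually_ge_atTop 2] with n hn
      have hlog : Real.log n ≠ 0 := (Real.log_pos (by exact_mod_cast hn)).ne'
      simp only [Function.comp_apply, Nat.floor_natCast, ← primePi_eq_primeCounting]
      field_simp
    · filter_upwards [eventually_ge_atTop 2] with n hn
      have hlog : Real.log n ≠ 0 := (Real.log_pos (by exact_mod_cast hn)).ne'
      have hn' : (n : ℝ) ≠ 0 := by positivity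
      simp only [Function.comp_apply]
      field_simp
  exact h2.trans_tendsto (Real.tendsto_log_atTop.comp tendsto_natCast_atTop_atTop).inv_tendsto_atTop

theorem tendsto_primePi_mul_log_div :
    Tendsto (fun n : ℕ => primePi n * Real.log n / n) atTop (nhds 1) := by
  have h := tendsto_primePi_mul_log_sub_theta_div.add tendsto_theta_div
  rw [zero_add] at h
  refine h.congr fun n => ?_
  rw [← add_div, sub_add_cancel]

/-- A set of primes whose logarithmic Dirichlet series has residue `A` at `1` has natural
density `A`. -/
theorem HasPoleAtOne.tendsto_density {S : ℕ → Prop} [DecidablePred S] {A : ℝ}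
    (h : HasPoleAtOne (fun l => if l.Prime ∧ S l then (Real.log l : ℂ) else 0) A) :
    Tendsto (fun n : ℕ =>
      (((Finset.range (n + 1)).filter (fun l => l.Prime ∧ S l)).card : ℝ) / primePi n)
      atTop (nhds A) := by
  have hle : ∀ n : ℕ, ∀ l ∈ Finset.range (n + 1), l.Prime → 0 ≤ Real.log n - Real.log l :=
    fun n l hl hp => sub_nonneg.2 (Real.log_le_log (by exact_mod_cast hp.pos)
      (by exact_mod_cast Finset.mem_range_succ_iff.1 hl))
  have h1 : Tendsto (fun n : ℕ =>
      (((Finset.range (n + 1)).filter (fun l => l.Prime ∧ S l)).card * Real.log n -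
        ∑ l ∈ (Finset.range (n + 1)).filter (fun l => l.Prime ∧ S l), Real.log l) / n)
      atTop (nhds 0) := by
    refine squeeze_zero (fun n => ?_) (fun n => ?_) tendsto_primePi_mul_log_sub_theta_div
    · rw [← nsmul_eq_mul, ← Finset.sum_const, ← Finset.sum_sub_distrib]
      exact div_nonneg (Finset.sum_nonneg fun l hl => hle n l (Finset.mem_filter.1 hl).1
        (Finset.mem_filter.1 hl).2.1) (Nat.cast_nonneg n)
    · refine div_le_div_of_nonneg_right ?_ (Nat.cast_nonneg n)
      rw [theta_eq_sum_range, primePi, ← nsmul_eq_mul, ← nsmul_eq_mul, ← Finset.sum_const,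
        ← Finset.sum_const, ← Finset.sum_sub_distrib, ← Finset.sum_sub_distrib]
      exact Finset.sum_le_sum_of_subset_of_nonneg
        (Finset.monotone_filter_right _ fun l _ hl => hl.1) fun l hl _ =>
          hle n l (Finset.mem_filter.1 hl).1 (Finset.mem_filter.1 hl).2
  have h2 := (h1.add h.tendsto_sum_log_div).div tendsto_primePi_mul_log_div one_ne_zero
  rw [zero_add, div_one] at h2
  refine h2.congr' ?_
  filter_upwards [eventually_ge_atTop 2] with n hn
  have hlog : Real.log n ≠ 0 := (Real.log_pos (by exact_mod_cast hn)).ne'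
  have hn' : (n : ℝ) ≠ 0 := by positivity
  simp only [Pi.div_apply]
  rw [← add_div, sub_add_cancel, div_div_div_cancel_right₀ hn', mul_div_mul_right _ _ hlog]

theorem ZsqrtdNegTwo.hasPoleAtOne_etaCoeff {n : ℕ} (hn : 1 ≤ n) :
    HasPoleAtOne (fun l => if l.Prime ∧ 5 ≤ l ∧ etaCoeff (24 * (2 ^ (2 * n + 1) + 1))
      (nuR (24 * (2 ^ (2 * n + 1) + 1)) l) = 1 then (Real.log l : ℂ) else 0)
      (((1 / 2) ^ (n + 2) : ℝ) : ℂ) := by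
  classical
  have h := ((hasPoleAtOne_isNormOfLevel hn).add
    ((hasPoleAtOne_isNormOfLevel (Nat.le_add_left 1 n)).const_mul (-1))).congr_primes
    (b := fun l => if l.Prime ∧ 5 ≤ l ∧ etaCoeff (24 * (2 ^ (2 * n + 1) + 1))
      (nuR (24 * (2 ^ (2 * n + 1) + 1)) l) = 1 then (Real.log l : ℂ) else 0)
    ⟨1, fun l => by
      rw [one_mul]
      split_ifs with hl
      · rw [Complex.norm_of_nonneg (Real.log_natCast_nonneg l),
          ArithmeticFunction.vonMangoldt_apply_prime hl.1]
      · rw [norm_zero]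
        exact ArithmeticFunction.vonMangoldt_nonneg⟩ (by
    filter_upwards [eventually_ge_atTop (2 ^ (2 * n + 1) + 1), eventually_ge_atTop 5]
      with l hl h5 hp
    have hlevel : IsNormOfLevel (n + 1) l → IsNormOfLevel n l := fun ⟨x, h1, h2, h3⟩ =>
      ⟨x, h1, h2, (pow_dvd_pow 2 n.le_succ).trans h3⟩
    simp only [nuR_of_le (Nat.succ_pos _) hl, etaCoeff_eq_one_iff n hp, hp, h5, true_and,
      Pi.add_apply, Pi.smul_apply, smul_eq_mul]
    by_cases h1 : IsNormOfLevel (n + 1) l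
    · simp [h1, hlevel h1]
    · simp [h1])
  convert h using 1
  push_cast
  rw [div_pow, one_pow, pow_succ _ (n + 1), pow_succ]
  field_simp
  norm_num

end Density

/-- Theorem D, `ℚ(√−2)`-dihedral case (triple powers): `D(24 ⬝ 3z_n) = 2^{-(n+2)}`
for `n ≥ 1`, where `z_n = (2·4^n + 1)/3`. -/
theorem etaPowerDensity_dihedral_sqrt_neg_two_triple (n : ℕ) (hn : 1 ≤ n) :
    Tendsto
      (fun x : ℕ =>
        (etaDensityCount (24 * (3 * ((2 * 4 ^ n + 1) / 3))) x : ℝ) / (primePi x : ℝ))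
      atTop (nhds ((1 / 2 : ℝ) ^ (n + 2))) := by
  have hr : 3 * ((2 * 4 ^ n + 1) / 3) = 2 ^ (2 * n + 1) + 1 := by
    have h3 : (2 * 4 ^ n + 1) % 3 = 0 := by simp [Nat.add_mod, Nat.mul_mod, Nat.pow_mod]
    rw [Nat.mul_div_cancel' (Nat.dvd_of_mod_eq_zero h3), pow_succ, pow_mul, mul_comm]
    norm_num
  rw [hr]
  classical
  refine (ZsqrtdNegTwo.hasPoleAtOne_etaCoeff hn).tendsto_density.congr fun x => ?_
  rw [etaDensityCount]
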